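/- arXiv:2104.11310 — 2 statements merged into one kernel-verified Lean document; each statement's English description precedes it below -/
import Mathlib

section
/- (Quiver Radial Isotropy.) Let Q be a finite connected acyclic quiver, d a dimension vector of Q, V a real representation of Q of dimension vector d which is locally semi-simple, and σ ∈ ℤ^{Q₀} an integral weight. Then σ lies in the relative (intrinsic) interior of the orbit cone Ω(V) if and only if there exists A ∈ ∏_{x∈Q₀} GL(d(x),ℝ) that puts V in σ-critical position, i.e. such that the representation A·V is σ-critical. -/
open scoped BigOperators
open Matrix

namespace QuiverRI

variable {V A : Type}

/-- A real representation, of dimension vector `dv`, of the quiver with vertex set `V`,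
arrow set `A`, and each arrow `a : src a → tgt a`: a matrix in
`ℝ^{dv(tgt a) × dv(src a)}` for every arrow `a`. -/
def Rep (src tgt : A → V) (dv : V → ℕ) : Type :=
  ∀ a : A, Matrix (Fin (dv (tgt a))) (Fin (dv (src a))) ℝ

/-- A subrepresentation of `R`: a family of subspaces `space x ⊆ ℝ^{dv x}` invariant under
all the structure maps of `R`. -/
structure Subrep (src tgt : A → V) (dv : V → ℕ) (R : Rep src tgt dv) where
  space : ∀ x : V, Submodule ℝ (Fin (dv x) → ℝ)
  invariant : ∀ a : A, ∀ v ∈ space (src a), (R a).mulVec v ∈ space (tgt a)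

/-- The orbit cone `Ω(V)` of a representation: all real weights `σ` with `σ · dim R = 0`
and `σ · dim W ≤ 0` for every subrepresentation `W`. -/
def OrbitCone [Fintype V] (src tgt : A → V) (dv : V → ℕ) (R : Rep src tgt dv) :
    Set (V → ℝ) :=
  {σ | (∑ x, σ x * dv x) = 0 ∧
    ∀ W : Subrep src tgt dv R, (∑ x, σ x * Module.finrank ℝ (W.space x)) ≤ 0}

/-- A subrepresentation `W` of `R` is `σ`-stable (as a representation in its own right;
its subrepresentations are exactly the subrepresentations of `R` contained in `W`):
`σ · dim W = 0` and `σ · dim W' < 0` for every subrepresentation `W' ⊆ W` other than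
`0` and `W`. -/
def IsStableSub [Fintype V] (src tgt : A → V) (dv : V → ℕ) (R : Rep src tgt dv)
    (σ : V → ℤ) (W : Subrep src tgt dv R) : Prop :=
  (∑ x, σ x * (Module.finrank ℝ (W.space x) : ℤ)) = 0 ∧
  ∀ W' : Subrep src tgt dv R, (∀ x, W'.space x ≤ W.space x) →
    W'.space ≠ (fun x => (⊥ : Submodule ℝ (Fin (dv x) → ℝ))) → W'.space ≠ W.space →
    (∑ x, σ x * (Module.finrank ℝ (W'.space x) : ℤ)) < 0

/-- `R` is `σ`-polystable: it is the internal direct sum, at every vertex, of finitely many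
`σ`-stable subrepresentations. -/
def IsPolystable [Fintype V] (src tgt : A → V) (dv : V → ℕ) (R : Rep src tgt dv)
    (σ : V → ℤ) : Prop :=
  ∃ (k : ℕ) (W : Fin k → Subrep src tgt dv R),
    (∀ x : V, DirectSum.IsInternal (fun j : Fin k => (W j).space x)) ∧
    ∀ j, IsStableSub src tgt dv R σ (W j)

/-- `R` is locally semi-simple: `σ₀`-polystable for some integral weight `σ₀`. -/
def LocallySemisimple [Fintype V] (src tgt : A → V) (dv : V → ℕ)
    (R : Rep src tgt dv) : Prop :=
  ∃ σ₀ : V → ℤ, IsPolystable src tgt dv R σ₀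

/-- `R` is `σ`-critical:
`∑_{a : src a = x} (R a)ᵀ (R a) − ∑_{a : tgt a = x} (R a)(R a)ᵀ = σ(x) I` at each vertex. -/
def IsCritical [Fintype V] [Fintype A] [DecidableEq V] (src tgt : A → V) (dv : V → ℕ)
    (R : Rep src tgt dv) (σ : V → ℤ) : Prop :=
  ∀ x : V,
    ((∑ a : A, if h : src a = x then
        Matrix.reindex (finCongr (congrArg dv h)) (finCongr (congrArg dv h)) ((R a)ᵀ * R a)
      else 0) -
     (∑ a : A, if h : tgt a = x then
        Matrix.reindex (finCongr (congrArg dv h)) (finCongr (congrArg dv h)) (R a * (R a)ᵀ)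
      else 0))
    = (σ x : ℝ) • (1 : Matrix (Fin (dv x)) (Fin (dv x)) ℝ)

/-- The base-change action of `∏_x GL(dv x)` on representations:
`(A · R)(a) = A(tgt a) · R(a) · A(src a)⁻¹`. -/
noncomputable def act (src tgt : A → V) (dv : V → ℕ)
    (Amat : ∀ x : V, Matrix (Fin (dv x)) (Fin (dv x)) ℝ) (R : Rep src tgt dv) :
    Rep src tgt dv :=
  fun a => Amat (tgt a) * R a * (Amat (src a))⁻¹

/-- The quiver is connected (as an undirected graph). -/
def Connected (src tgt : A → V) : Prop :=
  ∀ x y : V, Relation.ReflTransGen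
    (fun u v => ∃ a : A, (src a = u ∧ tgt a = v) ∨ (src a = v ∧ tgt a = u)) x y

/-- The quiver is acyclic: it admits a strictly monotone grading of its vertices
(equivalently, it has no directed cycles). -/
def Acyclic (src tgt : A → V) : Prop :=
  ∃ r : V → ℕ, ∀ a : A, r (src a) < r (tgt a)

end QuiverRI

namespace QuiverRI

section Aux

variable {V A : Type}

/-- Weak (trace pairing) form of criticality. -/
def Pair [Fintype V] [Fintype A] (src tgt : A → V) (n : V → ℕ) (U : Rep src tgt n)
    (σ : V → ℝ) : Prop :=
  ∀ X : ∀ x : V, Matrix (Fin (n x)) (Fin (n x)) ℝ,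
    ∑ a, (trace (X (src a) * ((U a)ᵀ * U a)) - trace (X (tgt a) * (U a * (U a)ᵀ))) =
      ∑ x, σ x * trace (X x)

lemma pair_sum_aux [Fintype V] [Fintype A] [DecidableEq V] (f : A → V) (n : V → ℕ)
    (X : ∀ x : V, Matrix (Fin (n x)) (Fin (n x)) ℝ)
    (N : ∀ a : A, Matrix (Fin (n (f a))) (Fin (n (f a))) ℝ) :
    ∑ x, trace (X x * (∑ a : A, if h : f a = x then
        Matrix.reindex (finCongr (congrArg n h)) (finCongr (congrArg n h)) (N a) else 0)) =
      ∑ a, trace (X (f a) * N a) := by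
  simp only [Matrix.mul_sum, Matrix.trace_sum]
  rw [Finset.sum_comm]
  refine Finset.sum_congr rfl fun a _ => ?_
  rw [Finset.sum_eq_single (f a)]
  · rw [dif_pos rfl]
    congr 2
  · intro b _ hb
    rw [dif_neg (Ne.symm hb)]
    simp
  · simp

lemma pair_of_isCritical [Fintype V] [Fintype A] [DecidableEq V] (src tgt : A → V) (n : V → ℕ)
    (U : Rep src tgt n) (σ : V → ℤ) (h : IsCritical src tgt n U σ) :
    Pair src tgt n U (fun x => (σ x : ℝ)) := by
  intro X
  rw [Finset.sum_sub_distrib, ← pair_sum_aux src n X (fun a => (U a)ᵀ * U a),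
    ← pair_sum_aux tgt n X (fun a => U a * (U a)ᵀ), ← Finset.sum_sub_distrib]
  refine Finset.sum_congr rfl fun x _ => ?_
  rw [← Matrix.trace_sub, ← Matrix.mul_sub, h x]
  simp

lemma isCritical_of_pair [Fintype V] [Fintype A] [DecidableEq V] (src tgt : A → V) (n : V → ℕ)
    (U : Rep src tgt n) (σ : V → ℤ) (h : Pair src tgt n U (fun x => (σ x : ℝ))) :
    IsCritical src tgt n U σ := by
  have key : ∀ X : ∀ x : V, Matrix (Fin (n x)) (Fin (n x)) ℝ,
      ∑ x, trace (X x * (((∑ a : A, if h : src a = x then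
        Matrix.reindex (finCongr (congrArg n h)) (finCongr (congrArg n h)) ((U a)ᵀ * U a)
      else 0) -
     (∑ a : A, if h : tgt a = x then
        Matrix.reindex (finCongr (congrArg n h)) (finCongr (congrArg n h)) (U a * (U a)ᵀ)
      else 0)) - (σ x : ℝ) • (1 : Matrix (Fin (n x)) (Fin (n x)) ℝ))) = 0 := by
    intro X
    have := h X
    rw [Finset.sum_sub_distrib, ← pair_sum_aux src n X (fun a => (U a)ᵀ * U a),
      ← pair_sum_aux tgt n X (fun a => U a * (U a)ᵀ), ← Finset.sum_sub_distrib] at this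
    simp only [Matrix.mul_sub, Matrix.trace_sub] at this ⊢
    rw [Finset.sum_sub_distrib, this]
    simp
  intro x
  rw [← sub_eq_zero]
  ext i j
  have h2 := key (Pi.single x (Matrix.single j i 1))
  rw [Finset.sum_eq_single x] at h2
  · rw [Pi.single_eq_same, Matrix.trace_mul_comm, Matrix.trace_mul_single] at h2
    simpa using h2
  · intro y _ hy
    rw [Pi.single_eq_of_ne hy]
    simp
  · simp

lemma exists_proj (n : ℕ) (W : Submodule ℝ (Fin n → ℝ)) :
    ∃ P : Matrix (Fin n) (Fin n) ℝ, P * P = P ∧ Pᵀ = P ∧ (∀ v, v ∈ W ↔ P *ᵥ v = v) ∧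
      (∀ v, P *ᵥ v ∈ W) ∧
      trace P = Module.finrank ℝ W := by
  let e := (EuclideanSpace.equiv (Fin n) ℝ)
  let W' : Submodule ℝ (EuclideanSpace ℝ (Fin n)) := W.comap e.toLinearMap
  let p := W'.starProjection
  let P : Matrix (Fin n) (Fin n) ℝ := LinearMap.toMatrix' (e.toLinearMap ∘ₗ p.toLinearMap ∘ₗ e.symm.toLinearMap)
  have hPv : ∀ v, P *ᵥ v = e (p (e.symm v)) := by
    intro v
    simp only [P, LinearMap.toMatrix'_mulVec]
    rfl
  have hmem : ∀ v, v ∈ W ↔ P *ᵥ v = v := by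
    intro v
    rw [hPv]
    have : v ∈ W ↔ e.symm v ∈ W' := by simp [W']
    rw [this, ← Submodule.starProjection_eq_self_iff]
    constructor
    · intro h
      show e (W'.starProjection _) = _
      rw [h]; simp
    · intro h
      apply e.injective
      simpa using h
  have hin : ∀ v, P *ᵥ v ∈ W := by
    intro v
    rw [hPv]
    exact W'.starProjection_apply_mem (e.symm v)
  have hid : P * P = P := by
    apply Matrix.ext_of_mulVec_single
    intro i
    rw [← Matrix.mulVec_mulVec]
    exact (hmem _).1 (hin _)
  refine ⟨P, hid, ?_, hmem, hin, ?_⟩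
  · ext i j
    have h1 : ∀ i j, P i j = inner ℝ (EuclideanSpace.single i (1:ℝ)) (p (EuclideanSpace.single j (1:ℝ))) := by
      intro i j
      have : P i j = (P *ᵥ Pi.single j 1) i := by simp
      rw [this, hPv]
      simp [EuclideanSpace.inner_single_left, e]
      
    rw [Matrix.transpose_apply, h1, h1, real_inner_comm]
    exact W'.inner_starProjection_left_eq_right _ _
  · have := (LinearMap.IsProj.trace (f := Matrix.toLin' P) (p := W) ⟨fun v => by simpa using hin v, fun v hv => by simpa using (hmem v).1 hv⟩ )
    rw [← this, Matrix.trace_toLin'_eq]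

lemma arrow_defect {m n : ℕ} (U : Matrix (Fin m) (Fin n) ℝ) (P : Matrix (Fin n) (Fin n) ℝ)
    (Q : Matrix (Fin m) (Fin m) ℝ) (hP : P * P = P) (hPt : Pᵀ = P) (hQ : Q * Q = Q) (hQt : Qᵀ = Q)
    (hU : Q * U * P = U * P) :
    trace (P * (Uᵀ * U)) - trace (Q * (U * Uᵀ)) =
      - trace ((Q * U - U * P)ᵀ * (Q * U - U * P)) := by
  have e1 : trace (P * (Uᵀ * U)) = trace ((U * P)ᵀ * (U * P)) := by
    conv_lhs => rw [← hP]
    rw [Matrix.mul_assoc P P, Matrix.trace_mul_comm]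
    rw [Matrix.transpose_mul, hPt]
    simp only [Matrix.mul_assoc]
  have e2 : trace (Q * (U * Uᵀ)) = trace ((Q * U)ᵀ * (Q * U)) := by
    conv_lhs => rw [← hQ]
    rw [Matrix.trace_mul_comm, Matrix.transpose_mul, hQt]
    conv_rhs => rw [Matrix.mul_assoc, Matrix.trace_mul_comm]
    conv_lhs => rw [Matrix.trace_mul_comm]
    simp only [Matrix.mul_assoc]
  have e3 : (Q * U)ᵀ * (U * P) = Uᵀ * (U * P) := by
    rw [Matrix.transpose_mul, hQt, Matrix.mul_assoc, ← Matrix.mul_assoc, ← Matrix.mul_assoc,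
      Matrix.mul_assoc Uᵀ, Matrix.mul_assoc Uᵀ, hU]
  have e4 : trace (Uᵀ * (U * P)) = trace ((U * P)ᵀ * (U * P)) := by
    rw [← e1, ← Matrix.mul_assoc, Matrix.trace_mul_comm]
  have e5 : trace ((U * P)ᵀ * (Q * U)) = trace ((Q * U)ᵀ * (U * P)) := by
    rw [← Matrix.trace_transpose, Matrix.transpose_mul, Matrix.transpose_transpose]
  rw [e1, e2, Matrix.transpose_sub, Matrix.sub_mul, Matrix.mul_sub, Matrix.mul_sub]
  simp only [Matrix.trace_sub]
  rw [e5, e3, e4]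
  ring

lemma trace_tmul_nonneg {m n : ℕ} (D : Matrix (Fin m) (Fin n) ℝ) : 0 ≤ trace (Dᵀ * D) := by
  simp only [Matrix.trace, Matrix.diag, Matrix.mul_apply, Matrix.transpose_apply]
  exact Finset.sum_nonneg fun i _ => Finset.sum_nonneg fun j _ => mul_self_nonneg _

lemma trace_tmul_eq_zero {m n : ℕ} (D : Matrix (Fin m) (Fin n) ℝ) (h : trace (Dᵀ * D) = 0) :
    D = 0 := by
  simp only [Matrix.trace, Matrix.diag, Matrix.mul_apply, Matrix.transpose_apply] at h
  rw [Finset.sum_eq_zero_iff_of_nonneg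
    (fun i _ => Finset.sum_nonneg fun j _ => mul_self_nonneg _)] at h
  ext i j
  have := h j (Finset.mem_univ _)
  rw [Finset.sum_eq_zero_iff_of_nonneg (fun j _ => mul_self_nonneg _)] at this
  simpa using this i (Finset.mem_univ _)

lemma pair_semistable [Fintype V] [Fintype A] (src tgt : A → V) (n : V → ℕ)
    (U : Rep src tgt n) (σ : V → ℝ) (h : Pair src tgt n U σ) (W : Subrep src tgt n U) :
    (∑ x, σ x * Module.finrank ℝ (W.space x)) ≤ 0 ∧
    ((∑ x, σ x * Module.finrank ℝ (W.space x)) = 0 → ∃ W' : Subrep src tgt n U,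
      ∀ x, Module.finrank ℝ (W.space x) + Module.finrank ℝ (W'.space x) = n x) := by
  choose P hP hPt hmem hin htr using fun x => exists_proj (n x) (W.space x)
  have hU : ∀ a, P (tgt a) * U a * P (src a) = U a * P (src a) := by
    intro a
    apply Matrix.ext_of_mulVec_single
    intro i
    rw [← Matrix.mulVec_mulVec, ← Matrix.mulVec_mulVec, ← Matrix.mulVec_mulVec]
    exact (hmem _ _).1 (W.invariant a _ (hin _ _))
  have hs : (∑ x, σ x * Module.finrank ℝ (W.space x)) =
      - ∑ a, trace ((P (tgt a) * U a - U a * P (src a))ᵀ * (P (tgt a) * U a - U a * P (src a))) := by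
    have := h P
    simp only [htr] at this
    rw [← this, ← Finset.sum_neg_distrib]
    exact Finset.sum_congr rfl fun a _ =>
      arrow_defect (U a) (P (src a)) (P (tgt a)) (hP _) (hPt _) (hP _) (hPt _) (hU a)
  have hnn : ∀ a ∈ Finset.univ, 0 ≤ trace ((P (tgt a) * U a - U a * P (src a))ᵀ * (P (tgt a) * U a - U a * P (src a))) :=
    fun a _ => trace_tmul_nonneg _
  refine ⟨?_, ?_⟩
  · rw [hs]
    have := Finset.sum_nonneg hnn
    linarith
  · intro h0
    rw [hs, neg_eq_zero, Finset.sum_eq_zero_iff_of_nonneg hnn] at h0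
    have hcomm : ∀ a, P (tgt a) * U a = U a * P (src a) := fun a =>
      sub_eq_zero.1 (trace_tmul_eq_zero _ (h0 a (Finset.mem_univ _)))
    refine ⟨⟨fun x => LinearMap.ker (Matrix.toLin' (P x)), ?_⟩, ?_⟩
    · intro a v hv
      simp only [LinearMap.mem_ker, Matrix.toLin'_apply] at hv ⊢
      erw [Matrix.mulVec_mulVec]
      rw [hcomm, ← Matrix.mulVec_mulVec, hv, Matrix.mulVec_zero]
    · intro x
      have h1 := LinearMap.finrank_range_add_finrank_ker (Matrix.toLin' (P x))
      have h2 : LinearMap.range (Matrix.toLin' (P x)) = W.space x := by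
        ext v
        constructor
        · rintro ⟨w, rfl⟩
          exact hin x w
        · intro hv
          exact ⟨v, (hmem x v).1 hv⟩
      rw [h2] at h1
      simpa using h1

lemma transport [Fintype V] (src tgt : A → V) (n : V → ℕ) (R : Rep src tgt n)
    (B : ∀ x : V, Matrix (Fin (n x)) (Fin (n x)) ℝ) (hB : ∀ x, IsUnit (B x).det)
    (W : Subrep src tgt n R) :
    ∃ W' : Subrep src tgt n (act src tgt n B R),
      ∀ x, Module.finrank ℝ (W'.space x) = Module.finrank ℝ (W.space x) := by
  have hinj : ∀ x, Function.Injective (Matrix.toLin' (B x)) := by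
    intro x u v huv
    have := congrArg (fun w => (B x)⁻¹ *ᵥ w) huv
    simpa [Matrix.mulVec_mulVec, Matrix.nonsing_inv_mul _ (hB x)] using this
  refine ⟨⟨fun x => (W.space x).map (Matrix.toLin' (B x)), ?_⟩, ?_⟩
  · rintro a v ⟨w, hw, rfl⟩
    refine ⟨(R a).mulVec w, W.invariant a w hw, ?_⟩
    simp only [act, Matrix.toLin'_apply, Matrix.mulVec_mulVec]
    rw [Matrix.mul_assoc, Matrix.nonsing_inv_mul _ (hB (src a)), Matrix.mul_one]
  · intro x
    exact (LinearEquiv.finrank_eq (Submodule.equivMapOfInjective _ (hinj x) (W.space x))).symm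

lemma act_inv [Fintype V] (src tgt : A → V) (n : V → ℕ) (R : Rep src tgt n)
    (B : ∀ x : V, Matrix (Fin (n x)) (Fin (n x)) ℝ) (hB : ∀ x, IsUnit (B x).det) :
    act src tgt n (fun x => (B x)⁻¹) (act src tgt n B R) = R := by
  funext a
  simp only [act]
  rw [Matrix.nonsing_inv_nonsing_inv _ (hB _), Matrix.mul_assoc, Matrix.mul_assoc,
    Matrix.mul_assoc, Matrix.nonsing_inv_mul _ (hB _), Matrix.mul_one, ← Matrix.mul_assoc,
    Matrix.nonsing_inv_mul _ (hB _), Matrix.one_mul]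

lemma mem_interior_of [Fintype V] (src tgt : A → V) (n : V → ℕ) (R : Rep src tgt n)
    (σ : V → ℝ) (h0 : ∑ x, σ x * n x = 0)
    (h : ∀ W : Subrep src tgt n R, (∑ x, σ x * Module.finrank ℝ (W.space x)) ≤ 0 ∧
    ((∑ x, σ x * Module.finrank ℝ (W.space x)) = 0 → ∃ W' : Subrep src tgt n R,
      ∀ x, Module.finrank ℝ (W.space x) + Module.finrank ℝ (W'.space x) = n x)) :
    σ ∈ intrinsicInterior ℝ (OrbitCone src tgt n R) := by
  classical
  have hσ : σ ∈ OrbitCone src tgt n R := ⟨h0, fun W => (h W).1⟩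
  rw [mem_intrinsicInterior]
  refine ⟨⟨σ, subset_affineSpan ℝ _ hσ⟩, ?_, rfl⟩
  -- linear equations on the span
  have lin : ∀ e : V → ℝ, (∀ τ ∈ OrbitCone src tgt n R, ∑ x, τ x * e x = 0) →
      ∀ τ ∈ affineSpan ℝ (OrbitCone src tgt n R), ∑ x, τ x * e x = 0 := by
    intro e he τ hτ
    let φ : (V → ℝ) →ₗ[ℝ] ℝ := ∑ x, e x • LinearMap.proj x
    have hφ : ∀ τ, φ τ = ∑ x, τ x * e x := by
      intro τ; simp [φ, mul_comm]
    have : affineSpan ℝ (OrbitCone src tgt n R) ≤ (LinearMap.ker φ).toAffineSubspace := by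
      rw [affineSpan_le]
      intro τ hτ
      show φ τ = 0
      rw [hφ]; exact he τ hτ
    have := this hτ
    rw [← hφ]; exact this
  -- finitely many dimension vectors
  let D : Set (V → ℕ) := {e | ∃ W : Subrep src tgt n R, (∀ x, e x = Module.finrank ℝ (W.space x)) ∧
    (∑ x, σ x * e x) < 0}
  have hD : D.Finite := by
    apply (Set.finite_Iic n).subset
    rintro e ⟨W, hW, -⟩ x
    rw [hW]
    simpa using (W.space x).finrank_le
  rw [mem_interior]
  refine ⟨(fun τ : affineSpan ℝ (OrbitCone src tgt n R) => (τ : V → ℝ)) ⁻¹'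
    (⋂ e ∈ D, {τ : V → ℝ | ∑ x, τ x * e x < 0}), ?_, ?_, ?_⟩
  · rintro ⟨τ, hτ⟩ hm
    simp only [Set.mem_preimage, Set.mem_iInter, Set.mem_ofPred_eq] at hm
    refine ⟨lin _ (fun τ hτ => hτ.1) τ hτ, fun W => ?_⟩
    rcases (h W).1.lt_or_eq with hlt | heq
    · exact (hm (fun x => Module.finrank ℝ (W.space x)) ⟨W, fun x => rfl, hlt⟩).le
    · obtain ⟨W', hW'⟩ := (h W).2 heq
      refine (lin (fun x => (Module.finrank ℝ (W.space x) : ℝ)) ?_ τ hτ).le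
      intro τ hτ
      apply le_antisymm (hτ.2 W)
      have h1 := hτ.2 W'
      have h2 := hτ.1
      have h3 : ∑ x, τ x * (n x : ℝ) = ∑ x, τ x * Module.finrank ℝ (W.space x) + ∑ x, τ x * Module.finrank ℝ (W'.space x) := by
        rw [← Finset.sum_add_distrib]
        refine Finset.sum_congr rfl fun x _ => ?_
        have h4 : ((n x : ℕ) : ℝ) = Module.finrank ℝ (W.space x) + Module.finrank ℝ (W'.space x) := by
          exact_mod_cast (hW' x).symm
        rw [h4]; ring
      linarith
  · refine IsOpen.preimage continuous_subtype_val ?_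
    refine hD.isOpen_biInter fun e _ => ?_
    exact isOpen_lt (by fun_prop) continuous_const
  · simp only [Set.mem_preimage, Set.mem_iInter, Set.mem_ofPred_eq]
    rintro e ⟨W, -, hlt⟩
    exact hlt

lemma easy_direction [Fintype V] [Fintype A] (src tgt : A → V) (n : V → ℕ) (R : Rep src tgt n)
    (σ : V → ℝ) (B : ∀ x : V, Matrix (Fin (n x)) (Fin (n x)) ℝ) (hB : ∀ x, IsUnit (B x).det)
    (h : Pair src tgt n (act src tgt n B R) σ) :
    σ ∈ intrinsicInterior ℝ (OrbitCone src tgt n R) := by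
  apply mem_interior_of
  · have := h (fun x => 1)
    simp only [Matrix.one_mul, Matrix.trace_one, Fintype.card_fin] at this
    rw [← this]
    refine Finset.sum_eq_zero fun a _ => ?_
    rw [Matrix.trace_mul_comm, sub_self]
  · intro W
    obtain ⟨W1, hW1⟩ := transport src tgt n R B hB W
    have := pair_semistable src tgt n _ σ h W1
    simp only [hW1] at this
    refine ⟨this.1, fun h0 => ?_⟩
    obtain ⟨W2, hW2⟩ := this.2 h0
    have ht := transport src tgt n _ (fun x => (B x)⁻¹) (fun x => by simpa using hB x) W2
    rw [act_inv src tgt n R B hB] at ht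
    obtain ⟨W3, hW3⟩ := ht
    refine ⟨W3, fun x => ?_⟩
    rw [hW3 x]
    exact hW2 x

lemma layer {I : Type} [Fintype I] (w l : I → ℝ) (hw : ∑ i, w i = 0)
    (hc : ∀ c, (∃ i, l i < c) → (∃ i, c ≤ l i) → (∑ i, if l i < c then w i else 0) < 0)
    (hl : ∃ i j, l i < l j) : 0 < ∑ i, w i * l i := by
  obtain ⟨i0, j0, hij⟩ := hl
  have : Nonempty I := ⟨i0⟩
  obtain ⟨p, hp⟩ := Finite.exists_min l
  obtain ⟨q, hq⟩ := Finite.exists_max l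
  have hpq : l p < l q := lt_of_le_of_lt (hp i0) (lt_of_lt_of_le hij (hq j0))
  let g : ℝ → ℝ := fun c => ∑ i, Set.indicator {c : ℝ | c ≤ l i} (fun _ => w i) c
  have hgi : ∀ i, IntervalIntegrable (Set.indicator {c : ℝ | c ≤ l i} (fun _ => w i))
      MeasureTheory.volume (l p) (l q) := by
    intro i
    rw [intervalIntegrable_iff]
    exact (MeasureTheory.integrableOn_const (by simp)).indicator measurableSet_Iic
  have hint : ∫ c in (l p)..(l q), g c = ∑ i, w i * l i := by
    simp only [g]
    rw [intervalIntegral.integral_finsetSum (fun i _ => hgi i)]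
    have : ∀ i, ∫ c in (l p)..(l q), Set.indicator {c : ℝ | c ≤ l i} (fun _ => w i) c
        = w i * l i - w i * l p := by
      intro i
      rw [intervalIntegral.integral_indicator ⟨hp i, hq i⟩]
      simp; ring
    simp only [this]
    rw [Finset.sum_sub_distrib, ← Finset.sum_mul, hw]
    ring
  rw [← hint]
  apply intervalIntegral.intervalIntegral_pos_of_pos_on _ _ hpq
  · exact IntervalIntegrable.sum Finset.univ (fun i _ => hgi i) |>.congr (by
      intro c _; simp [g])
  · intro c hcc
    have h1 := hc c ⟨p, hcc.1⟩ ⟨q, hcc.2.le⟩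
    have h2 : g c + (∑ i, if l i < c then w i else 0) = 0 := by
      refine Eq.trans ?_ hw
      simp only [g]
      rw [← Finset.sum_add_distrib]
      refine Finset.sum_congr rfl fun i _ => ?_
      by_cases hi : l i < c
      · simp [Set.indicator, hi]
      · simp [Set.indicator, hi, not_lt.1 hi]
    linarith

lemma slope_pos [Fintype V] (src tgt : A → V) (n : V → ℕ)
    (M : Rep src tgt n) (σ : V → ℝ) (h0 : ∑ x, σ x * n x = 0)
    (hst : ∀ W : Subrep src tgt n M, (∃ x, 0 < Module.finrank ℝ (W.space x)) →
      (∃ x, Module.finrank ℝ (W.space x) < n x) →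
      ∑ x, σ x * Module.finrank ℝ (W.space x) < 0)
    (K : ∀ x : V, Matrix (Fin (n x)) (Fin (n x)) ℝ) (hK : ∀ x, (K x)ᵀ * K x = 1)
    (l : ∀ x : V, Fin (n x) → ℝ) (hl : ∃ p q : Σ x, Fin (n x), l p.1 p.2 < l q.1 q.2)
    (hM : ∀ a i j, ((K (tgt a))ᵀ * M a * K (src a)) i j ≠ 0 → l (tgt a) i ≤ l (src a) j) :
    0 < ∑ x, σ x * ∑ i, l x i := by
  have key := layer (I := Σ x, Fin (n x)) (fun p => σ p.1) (fun p => l p.1 p.2) ?_ ?_ hl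
  · rw [Fintype.sum_sigma] at key
    simpa [Finset.mul_sum] using key
  · rw [Fintype.sum_sigma]
    simpa [mul_comm] using h0
  · rintro c ⟨⟨x1, i1⟩, h1⟩ ⟨⟨x2, i2⟩, h2⟩
    have hli : ∀ x, LinearIndependent ℝ (fun i : {i // l x i < c} => (K x).col i.1) := by
      intro x
      have : LinearIndependent ℝ (K x).col := by
        apply Matrix.linearIndependent_cols_of_isUnit
        exact IsUnit.of_mul_eq_one _ (mul_eq_one_comm.1 (hK x))
      exact this.comp _ Subtype.val_injective
    let W : Subrep src tgt n M :=
      ⟨fun x => Submodule.span ℝ (Set.range (fun i : {i // l x i < c} => (K x).col i.1)), by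
        intro a v hv
        induction hv using Submodule.span_induction with
        | mem v hv =>
          obtain ⟨⟨j, hj⟩, rfl⟩ := hv
          have : (M a) *ᵥ ((K (src a)).col j) =
              ∑ i, ((K (tgt a))ᵀ * M a * K (src a)) i j • (K (tgt a)).col i := by
            have e1 : M a * K (src a) = K (tgt a) * ((K (tgt a))ᵀ * M a * K (src a)) := by
              rw [Matrix.mul_assoc, ← Matrix.mul_assoc (K (tgt a)), mul_eq_one_comm.1 (hK _),
                Matrix.one_mul]
            have e2 : (M a) *ᵥ ((K (src a)).col j) = (M a * K (src a)).col j := by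
              ext k; rfl
            rw [e2, e1]
            ext k
            rw [Matrix.col_apply, Matrix.mul_apply]
            simp [mul_comm]
          erw [this]
          refine Submodule.sum_mem _ fun i _ => ?_
          by_cases hz : ((K (tgt a))ᵀ * M a * K (src a)) i j = 0
          · rw [hz, zero_smul]; exact Submodule.zero_mem _
          · exact Submodule.smul_mem _ _ (Submodule.subset_span
              ⟨⟨i, lt_of_le_of_lt (hM a i j hz) hj⟩, rfl⟩)
        | zero => erw [Matrix.mulVec_zero]; exact Submodule.zero_mem _
        | add u v _ _ hu hv => erw [Matrix.mulVec_add]; exact Submodule.add_mem _ hu hv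
        | smul t v _ hv => erw [Matrix.mulVec_smul]; exact Submodule.smul_mem _ _ hv⟩
    have hdim : ∀ x, Module.finrank ℝ (W.space x) = Fintype.card {i // l x i < c} :=
      fun x => finrank_span_eq_card (hli x)
    have := hst W ⟨x1, ?_⟩ ⟨x2, ?_⟩
    · rw [Fintype.sum_sigma]
      refine lt_of_eq_of_lt (Finset.sum_congr rfl fun x _ => ?_) this
      rw [hdim, Fintype.card_subtype, ← Finset.sum_filter]
      simp [mul_comm]
    · rw [hdim]
      exact Fintype.card_pos_iff.2 ⟨⟨i1, h1⟩⟩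
    · rw [hdim]
      calc _ < Fintype.card (Fin (n x2)) := Fintype.card_subtype_lt (p := fun i => l x2 i < c) (x := i2) (not_lt.2 h2)
        _ = _ := Fintype.card_fin _

/-- The Kempf–Ness energy in spectral coordinates. -/
noncomputable def Fen [Fintype V] [Fintype A] (src tgt : A → V) (n : V → ℕ) (M : Rep src tgt n)
    (σ : V → ℝ) (K : ∀ x : V, Matrix (Fin (n x)) (Fin (n x)) ℝ) (l : ∀ x : V, Fin (n x) → ℝ) : ℝ :=
  (∑ a, ∑ i, ∑ j, (((K (tgt a))ᵀ * M a * K (src a)) i j) ^ 2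
    * Real.exp (l (tgt a) i - l (src a) j)) + ∑ x, σ x * ∑ i, l x i

/-- Families of orthogonal matrices. -/
def Kset (n : V → ℕ) : Set (∀ x : V, Matrix (Fin (n x)) (Fin (n x)) ℝ) :=
  {K | ∀ x, (K x)ᵀ * K x = 1}

lemma continuous_entry (src tgt : A → V) (n : V → ℕ) (M : Rep src tgt n) (a : A) (i j) :
    Continuous (fun K : (∀ x : V, Matrix (Fin (n x)) (Fin (n x)) ℝ) =>
      ((K (tgt a))ᵀ * M a * K (src a)) i j) := by
  have h : Continuous (fun K : (∀ x : V, Matrix (Fin (n x)) (Fin (n x)) ℝ) =>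
      (K (tgt a))ᵀ * M a * K (src a)) := by
    apply Continuous.matrix_mul
    · apply Continuous.matrix_mul
      · exact (continuous_apply (tgt a)).matrix_transpose
      · exact continuous_const
    · exact continuous_apply (src a)
  exact h.matrix_elem i j

lemma continuous_lin [Fintype V] (n : V → ℕ) (σ : V → ℝ) :
    Continuous (fun l : (∀ x : V, Fin (n x) → ℝ) => ∑ x, σ x * ∑ i, l x i) := by
  fun_prop

lemma continuous_Fen [Fintype V] [Fintype A] (src tgt : A → V) (n : V → ℕ) (M : Rep src tgt n)
    (σ : V → ℝ) :
    Continuous (fun p : (∀ x : V, Matrix (Fin (n x)) (Fin (n x)) ℝ) × (∀ x : V, Fin (n x) → ℝ) =>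
      Fen src tgt n M σ p.1 p.2) := by
  unfold Fen
  apply Continuous.add
  · refine continuous_finsetSum _ fun a _ => continuous_finsetSum _ fun i _ =>
      continuous_finsetSum _ fun j _ => ?_
    apply Continuous.mul
    · exact ((continuous_entry src tgt n M a i j).comp continuous_fst).pow 2
    · fun_prop
  · exact (continuous_lin n σ).comp continuous_snd

lemma isCompact_Kset [Fintype V] (n : V → ℕ) : IsCompact (Kset n) := by
  have hc : IsCompact (Set.univ.pi fun x : V => (Set.univ.pi fun _ : Fin (n x) =>
      Set.univ.pi fun _ : Fin (n x) => Set.Icc (-1 : ℝ) 1)) :=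
    isCompact_univ_pi fun x => isCompact_univ_pi fun i => isCompact_univ_pi fun j => isCompact_Icc
  have hcl : IsClosed (Kset n) := by
    have : Kset n = ⋂ x, {K | (K x)ᵀ * K x = 1} := by ext K; simp [Kset]
    rw [this]
    refine isClosed_iInter fun x => isClosed_eq ?_ continuous_const
    exact Continuous.matrix_mul (continuous_apply x).matrix_transpose (continuous_apply x)
  refine IsCompact.of_isClosed_subset hc hcl ?_
  intro K hK x _ i _ j _
  have h := congrFun (congrFun (hK x) j) j
  rw [Matrix.mul_apply] at h
  simp only [Matrix.transpose_apply, Matrix.one_apply_eq] at h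
  have h2 : K x i j * K x i j ≤ 1 := by
    rw [← h]
    exact Finset.single_le_sum (f := fun i => K x i j * K x i j)
      (fun i _ => mul_self_nonneg _) (Finset.mem_univ i)
  rw [Set.mem_Icc]
  exact abs_le.1 (abs_le_one_iff_mul_self_le_one.2 h2)

lemma Fen_ge_lin [Fintype V] [Fintype A] (src tgt : A → V) (n : V → ℕ) (M : Rep src tgt n)
    (σ : V → ℝ) (K) (l) : ∑ x, σ x * ∑ i, l x i ≤ Fen src tgt n M σ K l := by
  unfold Fen
  have : 0 ≤ (∑ a, ∑ i, ∑ j, (((K (tgt a))ᵀ * M a * K (src a)) i j) ^ 2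
    * Real.exp (l (tgt a) i - l (src a) j)) :=
    Finset.sum_nonneg fun a _ => Finset.sum_nonneg fun i _ => Finset.sum_nonneg fun j _ => by positivity
  linarith

lemma Fen_ge_entry [Fintype V] [Fintype A] (src tgt : A → V) (n : V → ℕ) (M : Rep src tgt n)
    (σ : V → ℝ) (K) (l) (a : A) (i) (j) : (((K (tgt a))ᵀ * M a * K (src a)) i j) ^ 2
    * Real.exp (l (tgt a) i - l (src a) j) + ∑ x, σ x * ∑ i, l x i ≤ Fen src tgt n M σ K l := by
  unfold Fen
  gcongr
  have h1 := Finset.single_le_sum (s := Finset.univ) (f := fun a => ∑ i, ∑ j, (((K (tgt a))ᵀ * M a * K (src a)) i j) ^ 2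
    * Real.exp (l (tgt a) i - l (src a) j)) (fun a _ => Finset.sum_nonneg fun i _ => Finset.sum_nonneg fun j _ => by positivity) (Finset.mem_univ a)
  have h2 := Finset.single_le_sum (s := Finset.univ) (f := fun i => ∑ j, (((K (tgt a))ᵀ * M a * K (src a)) i j) ^ 2
    * Real.exp (l (tgt a) i - l (src a) j)) (fun i _ => Finset.sum_nonneg fun j _ => by positivity) (Finset.mem_univ i)
  have h3 := Finset.single_le_sum (s := Finset.univ) (f := fun j => (((K (tgt a))ᵀ * M a * K (src a)) i j) ^ 2
    * Real.exp (l (tgt a) i - l (src a) j)) (fun j _ => by positivity) (Finset.mem_univ j)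
  exact h3.trans (h2.trans h1)

lemma exp_beats (δ C' : ℝ) (hδ : 0 < δ) :
    Filter.Tendsto (fun r : ℝ => δ * Real.exp (r * δ) - C' * r) Filter.atTop Filter.atTop := by
  have h1 : Filter.Tendsto (fun r : ℝ => r * δ) Filter.atTop Filter.atTop :=
    Filter.tendsto_id.atTop_mul_const hδ
  have h2 := (Real.tendsto_exp_div_pow_atTop 1).comp h1
  have h3 : Filter.Tendsto (fun r : ℝ => r * (δ * δ * (Real.exp (r * δ) / (r * δ) ^ 1) - C'))
      Filter.atTop Filter.atTop := by
    apply Filter.tendsto_id.atTop_mul_atTop₀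
    apply Filter.tendsto_atTop_add_const_right
    exact h2.const_mul_atTop (by positivity)
  refine h3.congr' ?_
  filter_upwards [Filter.eventually_gt_atTop 0] with r hr
  field_simp

lemma Fen_coercive_local [Fintype V] [Fintype A] (src tgt : A → V) (n : V → ℕ)
    (M : Rep src tgt n) (σ : V → ℝ) (h0 : ∑ x, σ x * n x = 0)
    (hst : ∀ W : Subrep src tgt n M, (∃ x, 0 < Module.finrank ℝ (W.space x)) →
      (∃ x, Module.finrank ℝ (W.space x) < n x) →
      ∑ x, σ x * Module.finrank ℝ (W.space x) < 0)
    (K : ∀ x : V, Matrix (Fin (n x)) (Fin (n x)) ℝ) (hK : K ∈ Kset n)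
    (l : ∀ x : V, Fin (n x) → ℝ) (hl : ∃ p q : Σ x, Fin (n x), l p.1 p.2 < l q.1 q.2) (C : ℝ) :
    ∃ s ∈ nhds (K, l), ∀ᶠ r : ℝ in Filter.atTop, ∀ p ∈ s, C < Fen src tgt n M σ p.1 (r • p.2) := by
  have hlin : ∀ (r : ℝ) (l : ∀ x : V, Fin (n x) → ℝ),
      ∑ x, σ x * ∑ i, (r • l) x i = r * ∑ x, σ x * ∑ i, l x i := by
    intro r l
    simp only [Pi.smul_apply, smul_eq_mul, ← Finset.mul_sum]
    rw [Finset.mul_sum]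
    exact Finset.sum_congr rfl fun x _ => by ring
  have hcl : Continuous (fun p : (∀ x : V, Matrix (Fin (n x)) (Fin (n x)) ℝ) ×
      (∀ x : V, Fin (n x) → ℝ) => ∑ x, σ x * ∑ i, p.2 x i) :=
    (continuous_lin n σ).comp continuous_snd
  by_cases hM : ∀ a i j, ((K (tgt a))ᵀ * M a * K (src a)) i j ≠ 0 → l (tgt a) i ≤ l (src a) j
  · have hpos := slope_pos src tgt n M σ h0 hst K hK l hl hM
    obtain ⟨δ, hδ, hδ2⟩ := exists_between hpos
    refine ⟨_, hcl.continuousAt.eventually (lt_mem_nhds hδ2), ?_⟩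
    have ht : Filter.Tendsto (fun r : ℝ => r * δ) Filter.atTop Filter.atTop :=
      Filter.tendsto_id.atTop_mul_const hδ
    filter_upwards [Filter.eventually_gt_atTop 0, ht.eventually_gt_atTop C] with r hr hr2 p hp
    refine lt_of_lt_of_le ?_ (Fen_ge_lin src tgt n M σ _ _)
    rw [hlin]
    have hp' : δ < ∑ x, σ x * ∑ i, p.2 x i := hp
    nlinarith
  · push Not at hM
    obtain ⟨a, i, j, hne, hlt⟩ := hM
    have hsq : 0 < (((K (tgt a))ᵀ * M a * K (src a)) i j) ^ 2 := by positivity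
    have hdf : 0 < l (tgt a) i - l (src a) j := sub_pos.2 hlt
    obtain ⟨δ, hδ, hδ2⟩ := exists_between (lt_min hsq hdf)
    rw [lt_min_iff] at hδ2
    obtain ⟨C', hC'⟩ := exists_lt (∑ x, σ x * ∑ i, l x i)
    have c1 : Continuous (fun p : (∀ x : V, Matrix (Fin (n x)) (Fin (n x)) ℝ) ×
      (∀ x : V, Fin (n x) → ℝ) => (((p.1 (tgt a))ᵀ * M a * p.1 (src a)) i j) ^ 2) :=
      Continuous.pow (Continuous.comp (g := fun K : (∀ x : V, Matrix (Fin (n x)) (Fin (n x)) ℝ) =>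
        ((K (tgt a))ᵀ * M a * K (src a)) i j) (continuous_entry src tgt n M a i j) continuous_fst) 2
    have c2 : Continuous (fun p : (∀ x : V, Matrix (Fin (n x)) (Fin (n x)) ℝ) ×
      (∀ x : V, Fin (n x) → ℝ) => p.2 (tgt a) i - p.2 (src a) j) := by fun_prop
    have ev1 : ∀ᶠ p in nhds (K, l), δ < (((p.1 (tgt a))ᵀ * M a * p.1 (src a)) i j) ^ 2 :=
      (c1.tendsto (K, l)).eventually_const_lt hδ2.1
    have ev2 : ∀ᶠ p in nhds (K, l), δ < p.2 (tgt a) i - p.2 (src a) j :=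
      (c2.tendsto (K, l)).eventually_const_lt hδ2.2
    have ev3 : ∀ᶠ p in nhds (K, l), C' < ∑ x, σ x * ∑ i, p.2 x i :=
      (hcl.tendsto (K, l)).eventually_const_lt hC'
    refine ⟨_, ev1.and (ev2.and ev3), ?_⟩
    filter_upwards [Filter.eventually_gt_atTop 0,
      (exp_beats δ (-C') hδ).eventually_gt_atTop C] with r hr hr2 p hp
    obtain ⟨hp1, hp2, hp3⟩ := hp
    refine lt_of_lt_of_le ?_ (Fen_ge_entry src tgt n M σ _ _ a i j)
    rw [hlin]
    have e1 : δ * Real.exp (r * δ) ≤ (((p.1 (tgt a))ᵀ * M a * p.1 (src a)) i j) ^ 2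
        * Real.exp ((r • p.2) (tgt a) i - (r • p.2) (src a) j) := by
      apply mul_le_mul hp1.le _ (Real.exp_pos _).le (sq_nonneg _)
      apply Real.exp_le_exp.2
      simp only [Pi.smul_apply, smul_eq_mul, ← mul_sub]
      exact mul_le_mul_of_nonneg_left hp2.le hr.le
    have e2 : C' * r ≤ r * ∑ x, σ x * ∑ i, p.2 x i := by nlinarith
    linarith

lemma Fen_min [Fintype V] [Fintype A] (src tgt : A → V) (n : V → ℕ)
    (M : Rep src tgt n) (σ : V → ℝ) (h0 : ∑ x, σ x * n x = 0)
    (hst : ∀ W : Subrep src tgt n M, (∃ x, 0 < Module.finrank ℝ (W.space x)) →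
      (∃ x, Module.finrank ℝ (W.space x) < n x) →
      ∑ x, σ x * Module.finrank ℝ (W.space x) < 0) :
    ∃ K0 ∈ Kset n, ∃ l0, ∀ K ∈ Kset n, ∀ l,
      Fen src tgt n M σ K0 l0 ≤ Fen src tgt n M σ K l := by
  have hone : (fun x => 1 : ∀ x : V, Matrix (Fin (n x)) (Fin (n x)) ℝ) ∈ Kset n := by
    intro x; simp
  set C := Fen src tgt n M σ (fun x => 1) 0 with hC
  let Z : Set (∀ x : V, Fin (n x) → ℝ) := {l | ∑ x, ∑ i, l x i = 0}
  have hZ : IsClosed Z := isClosed_eq (by fun_prop) continuous_const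
  have hZ0 : (0 : ∀ x : V, Fin (n x) → ℝ) ∈ Z := by simp [Z]
  let S := Kset n ×ˢ (Metric.sphere (0 : ∀ x : V, Fin (n x) → ℝ) 1 ∩ Z)
  have hS : IsCompact S := (isCompact_Kset n).prod ((isCompact_sphere _ _).inter_right hZ)
  have hco : ∀ᶠ r : ℝ in Filter.atTop, ∀ p ∈ S, C < Fen src tgt n M σ p.1 (r • p.2) := by
    refine hS.induction_on (p := fun S => ∀ᶠ r : ℝ in Filter.atTop, ∀ p ∈ S, C < Fen src tgt n M σ p.1 (r • p.2)) (by simp) ?_ ?_ ?_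
    · intro s t hst ht
      filter_upwards [ht] with r hr p hp using hr p (hst hp)
    · intro s t hs ht
      filter_upwards [hs, ht] with r h1 h2 p hp
      exact hp.elim (h1 p) (h2 p)
    · rintro ⟨K, l⟩ ⟨hK, hl1, hl2⟩
      have hnc : ∃ p q : Σ x, Fin (n x), l p.1 p.2 < l q.1 q.2 := by
        by_contra hcon
        push Not at hcon
        have hzero : l = 0 := by
          funext x i
          have hconst : ∀ y j, l y j = l x i := fun y j =>
            le_antisymm (hcon ⟨x, i⟩ ⟨y, j⟩) (hcon ⟨y, j⟩ ⟨x, i⟩)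
          have h3 : ∑ p : (Σ x, Fin (n x)), l p.1 p.2 = 0 := by
            rw [Fintype.sum_sigma]; exact hl2
          simp only [hconst, Finset.sum_const, Finset.card_univ, nsmul_eq_mul, mul_eq_zero] at h3
          rcases h3 with h3 | h3
          · have : 0 < Fintype.card (Σ x, Fin (n x)) := Fintype.card_pos_iff.2 ⟨⟨x, i⟩⟩
            rw [Nat.cast_eq_zero] at h3
            omega
          · simpa using h3
        rw [hzero] at hl1
        simp at hl1
      obtain ⟨s, hs, h⟩ := Fen_coercive_local src tgt n M σ h0 hst K hK l hnc C
      exact ⟨s, mem_nhdsWithin_of_mem_nhds hs, h⟩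
  obtain ⟨r0, hr0⟩ := Filter.eventually_atTop.1 hco
  let r1 := max r0 1
  let T := Kset n ×ˢ (Metric.closedBall (0 : ∀ x : V, Fin (n x) → ℝ) r1 ∩ Z)
  have hT : IsCompact T := (isCompact_Kset n).prod ((isCompact_closedBall _ _).inter_right hZ)
  have hT0 : ((fun x => 1 : ∀ x : V, Matrix (Fin (n x)) (Fin (n x)) ℝ), (0 : ∀ x : V, Fin (n x) → ℝ)) ∈ T :=
    ⟨hone, by simp [r1], hZ0⟩
  obtain ⟨⟨K0, l0⟩, hmem, hmin⟩ := hT.exists_isMinOn ⟨_, hT0⟩ (continuous_Fen src tgt n M σ).continuousOn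
  refine ⟨K0, hmem.1, l0, ?_⟩
  have hle : ∀ K ∈ Kset n, ∀ l ∈ Z, Fen src tgt n M σ K0 l0 ≤ Fen src tgt n M σ K l := by
    intro K hK l hl
    by_cases hb : ‖l‖ ≤ r1
    · exact hmin (a := (K, l)) ⟨hK, by simpa using hb, hl⟩
    · push Not at hb
      have hpos : 0 < ‖l‖ := lt_of_lt_of_le one_pos ((le_max_right _ _).trans hb.le)
      have h1 := hr0 ‖l‖ ((le_max_left _ _).trans hb.le) (K, ‖l‖⁻¹ • l) ⟨hK, by
        simp [norm_smul, hpos.ne'], by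
        show ∑ x, ∑ i, (‖l‖⁻¹ • l) x i = 0
        simp only [Pi.smul_apply, smul_eq_mul, ← Finset.mul_sum]
        rw [show ∑ x, ∑ i, l x i = 0 from hl, mul_zero]⟩
      simp only [smul_smul, mul_inv_cancel₀ hpos.ne', one_smul] at h1
      exact (hmin hT0).trans h1.le
  intro K hK l
  let N : ℝ := Fintype.card (Σ x, Fin (n x))
  let m : ℝ := (∑ x, ∑ i, l x i) / N
  have h1 := hle K hK (fun x i => l x i - m) (by
    show ∑ x, ∑ i, (l x i - m) = 0
    rw [← Fintype.sum_sigma' (fun x i => l x i - m), Finset.sum_sub_distrib, Finset.sum_const,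
      Fintype.sum_sigma]
    simp only [Finset.card_univ, nsmul_eq_mul]
    show (∑ x, ∑ i, l x i) - N * m = 0
    by_cases hN : N = 0
    · have : IsEmpty (Σ x, Fin (n x)) := by
        apply Fintype.card_eq_zero_iff.1
        exact Nat.cast_eq_zero.1 (show ((Fintype.card (Σ x, Fin (n x)) : ℕ) : ℝ) = 0 from hN)
      rw [hN, ← Fintype.sum_sigma' (fun x i => l x i)]
      simp
    · simp only [m]; field_simp; ring)
  refine h1.trans (le_of_eq ?_)
  unfold Fen
  congr 1
  · simp
  · simp only [Finset.sum_sub_distrib, mul_sub, Finset.sum_const, Finset.card_univ, Fintype.card_fin, nsmul_eq_mul]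
    have : ∑ x, σ x * ((n x : ℝ) * m) = (∑ x, σ x * n x) * m := by
      rw [Finset.sum_mul]; exact Finset.sum_congr rfl fun x _ => by ring
    rw [this, h0]; ring

lemma exists_spectral {m : ℕ} (X : Matrix (Fin m) (Fin m) ℝ) (hX : X.IsHermitian) :
    ∃ Q : Matrix (Fin m) (Fin m) ℝ, Qᵀ * Q = 1 ∧ X = Q * diagonal hX.eigenvalues * Qᵀ := by
  refine ⟨(hX.eigenvectorUnitary : Matrix (Fin m) (Fin m) ℝ), ?_, ?_⟩
  · have := Unitary.coe_star_mul_self hX.eigenvectorUnitary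
    rwa [Matrix.star_eq_conjTranspose, Matrix.conjTranspose_eq_transpose_of_trivial] at this
  · have := hX.spectral_theorem
    rw [Unitary.conjStarAlgAut_apply, Matrix.star_eq_conjTranspose,
      Matrix.conjTranspose_eq_transpose_of_trivial] at this
    exact this

lemma exists_spectral_pos {m : ℕ} (H : Matrix (Fin m) (Fin m) ℝ) (hH : H.PosDef) :
    ∃ (Q : Matrix (Fin m) (Fin m) ℝ) (l : Fin m → ℝ), Qᵀ * Q = 1 ∧
      H = Q * diagonal (fun i => Real.exp (l i)) * Qᵀ := by
  obtain ⟨Q, h1, h2⟩ := exists_spectral H hH.1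
  refine ⟨Q, fun i => Real.log (hH.1.eigenvalues i), h1, ?_⟩
  have : (fun i => Real.exp (Real.log (hH.1.eigenvalues i))) = hH.1.eigenvalues := by
    funext i
    exact Real.exp_log (hH.eigenvalues_pos i)
  rw [this]
  exact h2

/-- The Kempf–Ness energy as a function of positive definite matrices. -/
noncomputable def fH [Fintype V] [Fintype A] (src tgt : A → V) (n : V → ℕ) (M : Rep src tgt n)
    (σ : V → ℝ) (H : ∀ x : V, Matrix (Fin (n x)) (Fin (n x)) ℝ) : ℝ :=
  (∑ a, trace (M a * (H (src a))⁻¹ * (M a)ᵀ * H (tgt a))) + ∑ x, σ x * Real.log (H x).det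

lemma trace_diag {p m : ℕ} (N : Matrix (Fin p) (Fin m) ℝ) (u : Fin m → ℝ) (v : Fin p → ℝ) :
    trace (N * diagonal u * Nᵀ * diagonal v) = ∑ i, ∑ j, N i j ^ 2 * (v i * u j) := by
  simp only [Matrix.trace, Matrix.diag, Matrix.mul_diagonal]
  refine Finset.sum_congr rfl fun i _ => ?_
  rw [Matrix.mul_apply, Finset.sum_mul]
  refine Finset.sum_congr rfl fun j _ => ?_
  rw [Matrix.mul_diagonal, Matrix.transpose_apply]
  ring

lemma inv_spec {m : ℕ} (Q : Matrix (Fin m) (Fin m) ℝ) (l : Fin m → ℝ) (hQ : Qᵀ * Q = 1) :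
    (Q * diagonal (fun i => Real.exp (l i)) * Qᵀ)⁻¹ =
      Q * diagonal (fun i => Real.exp (- l i)) * Qᵀ := by
  apply Matrix.inv_eq_right_inv
  calc _ = Q * diagonal (fun i => Real.exp (l i)) * (Qᵀ * Q) *
        diagonal (fun i => Real.exp (- l i)) * Qᵀ := by simp only [Matrix.mul_assoc]
    _ = Q * (diagonal (fun i => Real.exp (l i)) * diagonal (fun i => Real.exp (- l i))) * Qᵀ := by
        rw [hQ, Matrix.mul_one]; simp only [Matrix.mul_assoc]
    _ = 1 := by
        rw [Matrix.diagonal_mul_diagonal]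
        simp only [← Real.exp_add, add_neg_cancel, Real.exp_zero, Matrix.diagonal_one,
          Matrix.mul_one]
        exact mul_eq_one_comm.1 hQ

lemma det_spec {m : ℕ} (Q : Matrix (Fin m) (Fin m) ℝ) (l : Fin m → ℝ) (hQ : Qᵀ * Q = 1) :
    (Q * diagonal (fun i => Real.exp (l i)) * Qᵀ).det = Real.exp (∑ i, l i) := by
  have h : Q.det * Q.det = 1 := by
    have := congrArg Matrix.det hQ
    rwa [Matrix.det_mul, Matrix.det_transpose, Matrix.det_one] at this
  rw [Matrix.det_mul, Matrix.det_mul, Matrix.det_transpose, Matrix.det_diagonal, Real.exp_sum]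
  linear_combination (∏ i, Real.exp (l i)) * h

lemma fH_spec [Fintype V] [Fintype A] (src tgt : A → V) (n : V → ℕ) (M : Rep src tgt n)
    (σ : V → ℝ) (Q : ∀ x : V, Matrix (Fin (n x)) (Fin (n x)) ℝ) (hQ : Q ∈ Kset n)
    (l : ∀ x : V, Fin (n x) → ℝ) :
    fH src tgt n M σ (fun x => Q x * diagonal (fun i => Real.exp (l x i)) * (Q x)ᵀ) =
      Fen src tgt n M σ Q l := by
  unfold fH Fen
  congr 1
  · refine Finset.sum_congr rfl fun a _ => ?_
    rw [inv_spec _ _ (hQ _)]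
    have : trace (M a * (Q (src a) * diagonal (fun i => Real.exp (- l (src a) i)) * (Q (src a))ᵀ) *
        (M a)ᵀ * (Q (tgt a) * diagonal (fun i => Real.exp (l (tgt a) i)) * (Q (tgt a))ᵀ)) =
        trace (((Q (tgt a))ᵀ * M a * Q (src a)) * diagonal (fun i => Real.exp (- l (src a) i)) *
          ((Q (tgt a))ᵀ * M a * Q (src a))ᵀ * diagonal (fun i => Real.exp (l (tgt a) i))) := by
      rw [← Matrix.mul_assoc, Matrix.trace_mul_comm]
      simp only [Matrix.transpose_mul, Matrix.transpose_transpose, Matrix.mul_assoc]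
    rw [this, trace_diag]
    simp only [← Real.exp_add, ← sub_eq_add_neg]
  · refine Finset.sum_congr rfl fun x _ => ?_
    rw [det_spec _ _ (hQ x), Real.log_exp]

lemma fH_act [Fintype V] [Fintype A] (src tgt : A → V) (n : V → ℕ) (M : Rep src tgt n)
    (σ : V → ℝ) (B : ∀ x : V, Matrix (Fin (n x)) (Fin (n x)) ℝ) (hB : ∀ x, IsUnit (B x).det)
    (H : ∀ x : V, Matrix (Fin (n x)) (Fin (n x)) ℝ) (hH : ∀ x, (H x).det ≠ 0) :
    fH src tgt n M σ (fun x => (B x)ᵀ * H x * B x) =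
      fH src tgt n (act src tgt n B M) σ H + ∑ x, σ x * Real.log ((B x).det ^ 2) := by
  unfold fH
  rw [add_assoc, ← Finset.sum_add_distrib]
  congr 1
  · refine Finset.sum_congr rfl fun a _ => ?_
    simp only [act]
    rw [Matrix.mul_inv_rev, Matrix.mul_inv_rev, ← Matrix.transpose_nonsing_inv, ← Matrix.mul_assoc _ _ (B (tgt a)),
      Matrix.trace_mul_comm]
    simp only [Matrix.transpose_mul, Matrix.mul_assoc]
  · refine Finset.sum_congr rfl fun x _ => ?_
    have h1 : (B x).det ≠ 0 := (hB x).ne_zero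
    rw [← mul_add, ← Real.log_mul (hH x) (pow_ne_zero 2 h1), Matrix.det_mul, Matrix.det_mul,
      Matrix.det_transpose]
    congr 2
    ring

lemma posDef_spec {m : ℕ} (Q : Matrix (Fin m) (Fin m) ℝ) (l : Fin m → ℝ) (hQ : IsUnit Q.det) :
    (Qᵀ * diagonal (fun i => Real.exp (l i)) * Q).PosDef := by
  have h : (diagonal (fun i => Real.exp (l i)) : Matrix (Fin m) (Fin m) ℝ).PosDef :=
    Matrix.PosDef.diagonal fun i => Real.exp_pos _
  have := h.conjTranspose_mul_mul_same (B := Q) (by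
    rw [Matrix.mulVec_injective_iff_isUnit, Matrix.isUnit_iff_isUnit_det]; exact hQ)
  rwa [Matrix.conjTranspose_eq_transpose_of_trivial] at this

lemma stationary [Fintype V] [Fintype A] (src tgt : A → V) (n : V → ℕ) (U : Rep src tgt n)
    (σ : V → ℝ) (Q : ∀ x : V, Matrix (Fin (n x)) (Fin (n x)) ℝ) (c : ∀ x : V, Fin (n x) → ℝ)
    (hmin : ∀ s : ℝ, Fen src tgt n U σ Q (fun x i => 0 * c x i) ≤ Fen src tgt n U σ Q (fun x i => s * c x i)) :
    (∑ a, ∑ i, ∑ j, (((Q (tgt a))ᵀ * U a * Q (src a)) i j) ^ 2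
      * (c (tgt a) i - c (src a) j)) + ∑ x, σ x * ∑ i, c x i = 0 := by
  have hd : HasDerivAt (fun s : ℝ => Fen src tgt n U σ Q (fun x i => s * c x i))
      ((∑ a, ∑ i, ∑ j, (((Q (tgt a))ᵀ * U a * Q (src a)) i j) ^ 2
      * (c (tgt a) i - c (src a) j)) + ∑ x, σ x * ∑ i, c x i) 0 := by
    unfold Fen
    apply HasDerivAt.add
    · refine HasDerivAt.fun_sum fun a _ => HasDerivAt.fun_sum fun i _ => HasDerivAt.fun_sum fun j _ => ?_
      apply HasDerivAt.const_mul
      have h1 : HasDerivAt (fun s : ℝ => s * c (tgt a) i - s * c (src a) j)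
          (c (tgt a) i - c (src a) j) 0 :=
        (hasDerivAt_mul_const _).sub (hasDerivAt_mul_const _)
      simpa using h1.exp
    · refine HasDerivAt.fun_sum fun x _ => HasDerivAt.const_mul _ ?_
      exact HasDerivAt.fun_sum fun i _ => hasDerivAt_mul_const _
  exact IsLocalMin.hasDerivAt_eq_zero (Filter.Eventually.of_forall hmin) hd

lemma stable_exists [Fintype V] [Fintype A] (src tgt : A → V) (n : V → ℕ)
    (M : Rep src tgt n) (σ : V → ℝ) (h0 : ∑ x, σ x * n x = 0)
    (hst : ∀ W : Subrep src tgt n M, (∃ x, 0 < Module.finrank ℝ (W.space x)) →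
      (∃ x, Module.finrank ℝ (W.space x) < n x) →
      ∑ x, σ x * Module.finrank ℝ (W.space x) < 0) :
    ∃ B : ∀ x : V, Matrix (Fin (n x)) (Fin (n x)) ℝ, (∀ x, IsUnit (B x).det) ∧
      Pair src tgt n (act src tgt n B M) σ := by
  obtain ⟨K, hK, l, hmin⟩ := Fen_min src tgt n M σ h0 hst
  let B : ∀ x : V, Matrix (Fin (n x)) (Fin (n x)) ℝ :=
    fun x => diagonal (fun i => Real.exp (l x i / 2)) * (K x)ᵀ
  have hBu : ∀ x, IsUnit (B x).det := by
    intro x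
    have h1 : IsUnit ((K x)ᵀ).det := by
      rw [← Matrix.isUnit_iff_isUnit_det]
      exact IsUnit.of_mul_eq_one _ (hK x)
    simp only [B, Matrix.det_mul, Matrix.det_diagonal]
    exact IsUnit.mul (IsUnit.mk0 _ (Finset.prod_ne_zero_iff.2 fun i _ => (Real.exp_pos _).ne')) h1
  refine ⟨B, hBu, ?_⟩
  set U := act src tgt n B M with hU
  have hB1 : ∀ x, (B x)ᵀ * 1 * B x = K x * diagonal (fun i => Real.exp (l x i)) * (K x)ᵀ := by
    intro x
    simp only [B, Matrix.transpose_mul, Matrix.transpose_transpose, Matrix.diagonal_transpose,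
      Matrix.mul_one]
    rw [Matrix.mul_assoc, ← Matrix.mul_assoc (diagonal _) (diagonal _), Matrix.diagonal_mul_diagonal]
    simp only [← Real.exp_add, add_halves, Matrix.mul_assoc]
  -- minimality over all positive definite families
  have hglob : ∀ Q ∈ Kset n, ∀ c : ∀ x : V, Fin (n x) → ℝ,
      Fen src tgt n U σ Q (fun x i => 0) ≤ Fen src tgt n U σ Q c := by
    intro Q hQ c
    have hpd : ∀ x, ((B x)ᵀ * (Q x * diagonal (fun i => Real.exp (c x i)) * (Q x)ᵀ) * B x).PosDef := by
      intro x
      have := posDef_spec ((Q x)ᵀ * B x) (c x) (by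
        rw [Matrix.det_mul]
        refine IsUnit.mul ?_ (hBu x)
        rw [← Matrix.isUnit_iff_isUnit_det]
        exact IsUnit.of_mul_eq_one _ (hQ x))
      simpa only [Matrix.transpose_mul, Matrix.transpose_transpose, Matrix.mul_assoc] using this
    choose K' l' hK' hl' using fun x => exists_spectral_pos _ (hpd x)
    have e1 : fH src tgt n M σ (fun x => (B x)ᵀ * (Q x * diagonal (fun i => Real.exp (c x i)) * (Q x)ᵀ) * B x)
        = Fen src tgt n M σ K' l' := by
      rw [funext hl']
      exact fH_spec src tgt n M σ K' hK' l'
    have e2 := fH_act src tgt n M σ B hBu (fun x => Q x * diagonal (fun i => Real.exp (c x i)) * (Q x)ᵀ)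
      (fun x => by rw [det_spec _ _ (hQ x)]; exact (Real.exp_pos _).ne')
    rw [fH_spec src tgt n _ σ Q hQ c, e1] at e2
    have e3 := fH_act src tgt n M σ B hBu (fun x => 1) (fun x => by simp)
    rw [funext hB1, fH_spec src tgt n M σ K hK l] at e3
    have e4 : fH src tgt n (act src tgt n B M) σ (fun x => 1) = Fen src tgt n U σ Q (fun x i => 0) := by
      rw [← fH_spec src tgt n U σ Q hQ]
      congr 1
      funext x
      simp only [Real.exp_zero, Matrix.diagonal_one, Matrix.mul_one]
      exact (mul_eq_one_comm.1 (hQ x)).symm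
    have e5 := hmin K' hK' l'
    linarith
  -- symmetric test matrices
  have hsym : ∀ X : ∀ x : V, Matrix (Fin (n x)) (Fin (n x)) ℝ, (∀ x, (X x)ᵀ = X x) →
      ∑ a, (trace (X (src a) * ((U a)ᵀ * U a)) - trace (X (tgt a) * (U a * (U a)ᵀ))) =
      ∑ x, σ x * trace (X x) := by
    intro X hX
    have hH : ∀ x, (X x).IsHermitian := fun x => by
      rw [Matrix.IsHermitian, Matrix.conjTranspose_eq_transpose_of_trivial, hX]
    choose Q hQ hXQ using fun x => exists_spectral (X x) (hH x)
    let c : ∀ x : V, Fin (n x) → ℝ := fun x => (hH x).eigenvalues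
    have hs := stationary src tgt n U σ Q c (fun s => by
      have := hglob Q hQ (fun x i => s * c x i)
      simpa using this)
    have t1 : ∀ x, trace (X x) = ∑ i, c x i := by
      intro x
      rw [hXQ x, Matrix.trace_mul_comm, ← Matrix.mul_assoc, hQ x, Matrix.one_mul, Matrix.trace_diagonal]
    have t2 : ∀ a, trace (X (src a) * ((U a)ᵀ * U a)) =
        ∑ i, ∑ j, (((Q (tgt a))ᵀ * U a * Q (src a)) i j) ^ 2 * c (src a) j := by
      intro a
      have := trace_diag ((Q (tgt a))ᵀ * U a * Q (src a)) (c (src a)) (fun _ => 1)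
      simp only [one_mul, Matrix.diagonal_one, Matrix.mul_one] at this
      rw [← this, Matrix.trace_mul_comm]
      conv_lhs => rw [hXQ (src a)]
      simp only [Matrix.transpose_mul, Matrix.transpose_transpose]
      conv_rhs => rw [Matrix.mul_assoc, Matrix.mul_assoc, Matrix.mul_assoc, Matrix.trace_mul_comm]
      have h3 : Q (tgt a) * (Q (tgt a))ᵀ = 1 := mul_eq_one_comm.1 (hQ _)
      conv_rhs => 
        simp only [Matrix.mul_assoc]
        rw [h3, Matrix.mul_one]
      rw [Matrix.mul_assoc, Matrix.trace_mul_comm]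
      simp only [Matrix.mul_assoc]
      rfl
    have t3 : ∀ a, trace (X (tgt a) * (U a * (U a)ᵀ)) =
        ∑ i, ∑ j, (((Q (tgt a))ᵀ * U a * Q (src a)) i j) ^ 2 * c (tgt a) i := by
      intro a
      have := trace_diag ((Q (tgt a))ᵀ * U a * Q (src a)) (fun _ => 1) (c (tgt a))
      simp only [mul_one, Matrix.diagonal_one] at this
      rw [← this]
      conv_lhs => rw [hXQ (tgt a)]
      simp only [Matrix.transpose_mul, Matrix.transpose_transpose]
      have h3 : Q (src a) * (Q (src a))ᵀ = 1 := mul_eq_one_comm.1 (hQ _)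
      have h4 : (Q (tgt a))ᵀ * U a * Q (src a) * ((Q (src a))ᵀ * ((U a)ᵀ * Q (tgt a))) =
          (Q (tgt a))ᵀ * (U a * (U a)ᵀ) * Q (tgt a) := by
        calc _ = (Q (tgt a))ᵀ * U a * (Q (src a) * (Q (src a))ᵀ) * ((U a)ᵀ * Q (tgt a)) := by
              simp only [Matrix.mul_assoc]
          _ = _ := by rw [h3, Matrix.mul_one]; simp only [Matrix.mul_assoc]
      rw [Matrix.mul_one, h4]
      conv_lhs => rw [Matrix.mul_assoc, Matrix.trace_mul_comm]
      simp only [Matrix.mul_assoc]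
      rfl
    simp only [t1, t2, t3]
    simp only [mul_sub, Finset.sum_sub_distrib] at hs ⊢
    linarith
  intro X
  have h1 := hsym (fun x => X x + (X x)ᵀ) (fun x => by
    rw [Matrix.transpose_add, Matrix.transpose_transpose, add_comm])
  have t4 : ∀ {m : ℕ} (Y S : Matrix (Fin m) (Fin m) ℝ), Sᵀ = S → trace (Yᵀ * S) = trace (Y * S) := by
    intro m Y S hS
    rw [← Matrix.trace_transpose, Matrix.transpose_mul, Matrix.transpose_transpose, hS,
      Matrix.trace_mul_comm]
  have t5 : ∀ a, trace ((X (src a))ᵀ * ((U a)ᵀ * U a)) = trace (X (src a) * ((U a)ᵀ * U a)) :=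
    fun a => t4 _ _ (by rw [Matrix.transpose_mul, Matrix.transpose_transpose])
  have t6 : ∀ a, trace ((X (tgt a))ᵀ * (U a * (U a)ᵀ)) = trace (X (tgt a) * (U a * (U a)ᵀ)) :=
    fun a => t4 _ _ (by rw [Matrix.transpose_mul, Matrix.transpose_transpose])
  simp only [Matrix.add_mul, Matrix.trace_add, Matrix.trace_transpose, t5, t6] at h1
  have h2 : ∑ a, (trace (X (src a) * ((U a)ᵀ * U a)) + trace (X (src a) * ((U a)ᵀ * U a)) -
      (trace (X (tgt a) * (U a * (U a)ᵀ)) + trace (X (tgt a) * (U a * (U a)ᵀ)))) =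
      2 * ∑ a, (trace (X (src a) * ((U a)ᵀ * U a)) - trace (X (tgt a) * (U a * (U a)ᵀ))) := by
    rw [Finset.mul_sum]; exact Finset.sum_congr rfl fun a _ => by ring
  have h3 : ∑ x, σ x * (trace (X x) + trace (X x)) = 2 * ∑ x, σ x * trace (X x) := by
    rw [Finset.mul_sum]; exact Finset.sum_congr rfl fun a _ => by ring
  rw [h2, h3] at h1
  linarith

lemma trace_mul_blockDiagonal' {k : ℕ} (m : Fin k → ℕ)
    (X : Matrix (Σ j, Fin (m j)) (Σ j, Fin (m j)) ℝ) (D : ∀ j, Matrix (Fin (m j)) (Fin (m j)) ℝ) :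
    trace (X * blockDiagonal' D) = ∑ j, trace (blockDiag' X j * D j) := by
  simp only [Matrix.trace, Matrix.diag, Matrix.mul_apply]
  rw [Fintype.sum_sigma]
  refine Finset.sum_congr rfl fun j _ => Finset.sum_congr rfl fun i _ => ?_
  rw [Fintype.sum_sigma, Finset.sum_eq_single j]
  · simp [Matrix.blockDiag'_apply]
  · intro j' _ hj'
    refine Finset.sum_eq_zero fun i' _ => ?_
    rw [Matrix.blockDiagonal'_apply_ne _ _ _ hj', mul_zero]
  · simp

lemma trace_submatrix_equiv {I J : Type} [Fintype I] [Fintype J] (e : I ≃ J)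
    (Y : Matrix J J ℝ) : trace (Y.submatrix e e) = trace Y := by
  simp only [Matrix.trace, Matrix.diag, Matrix.submatrix_apply]
  exact Equiv.sum_comp e (fun i => Y i i)

lemma trace_reindex {I J : Type} [Fintype I] [Fintype J] (e : I ≃ J) (X : Matrix J J ℝ)
    (Y : Matrix I I ℝ) :
    trace (X * Y.submatrix e.symm e.symm) = trace (X.submatrix e e * Y) := by
  rw [← trace_submatrix_equiv e, ← Matrix.submatrix_mul_equiv _ _ e e e]
  simp

lemma pair_blockDiagonal [Fintype V] [Fintype A] (src tgt : A → V) (dv : V → ℕ) {k : ℕ}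
    (n : Fin k → V → ℕ) (U : ∀ j, Rep src tgt (n j)) (σ : V → ℝ)
    (hU : ∀ j, Pair src tgt (n j) (U j) σ)
    (e : ∀ x, (Σ j, Fin (n j x)) ≃ Fin (dv x)) (T : Rep src tgt dv)
    (hT : ∀ a, T a = (blockDiagonal' (fun j => U j a)).submatrix (e (tgt a)).symm (e (src a)).symm) :
    Pair src tgt dv T σ := by
  intro X
  have h1 : ∀ a, trace (X (src a) * ((T a)ᵀ * T a)) =
      ∑ j, trace (blockDiag' ((X (src a)).submatrix (e (src a)) (e (src a))) j * ((U j a)ᵀ * U j a)) := by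
    intro a
    rw [hT, Matrix.transpose_submatrix, Matrix.submatrix_mul_equiv, trace_reindex,
      Matrix.blockDiagonal'_transpose, ← Matrix.blockDiagonal'_mul, trace_mul_blockDiagonal']
  have h2 : ∀ a, trace (X (tgt a) * (T a * (T a)ᵀ)) =
      ∑ j, trace (blockDiag' ((X (tgt a)).submatrix (e (tgt a)) (e (tgt a))) j * (U j a * (U j a)ᵀ)) := by
    intro a
    rw [hT, Matrix.transpose_submatrix, Matrix.submatrix_mul_equiv, trace_reindex,
      Matrix.blockDiagonal'_transpose, ← Matrix.blockDiagonal'_mul, trace_mul_blockDiagonal']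
  have h3 : ∀ x, trace (X x) = ∑ j, trace (blockDiag' ((X x).submatrix (e x) (e x)) j) := by
    intro x
    rw [← trace_submatrix_equiv (e x)]
    simp only [Matrix.trace, Matrix.diag]
    rw [Fintype.sum_sigma]
    rfl
  simp only [h1, h2, h3, ← Finset.sum_sub_distrib, Finset.mul_sum]
  rw [Finset.sum_comm]
  conv_rhs => rw [Finset.sum_comm]
  exact Finset.sum_congr rfl fun j _ =>
    hU j (fun x => blockDiag' ((X x).submatrix (e x) (e x)) j)

lemma assemble [Fintype V] [Fintype A] (src tgt : A → V) (dv : V → ℕ) (R : Rep src tgt dv)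
    (σ : V → ℝ) (k : ℕ) (W : Fin k → Subrep src tgt dv R)
    (hint : ∀ x : V, DirectSum.IsInternal (fun j : Fin k => (W j).space x))
    (h0 : ∀ j, ∑ x, σ x * Module.finrank ℝ ((W j).space x) = 0)
    (hst : ∀ j, ∀ W' : Subrep src tgt dv R, (∀ x, W'.space x ≤ (W j).space x) →
      W'.space ≠ (fun x => (⊥ : Submodule ℝ (Fin (dv x) → ℝ))) → W'.space ≠ (W j).space →
      (∑ x, σ x * Module.finrank ℝ (W'.space x)) < 0) :
    ∃ B : ∀ x : V, Matrix (Fin (dv x)) (Fin (dv x)) ℝ, (∀ x, IsUnit (B x).det) ∧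
      Pair src tgt dv (act src tgt dv B R) σ := by
  classical
  let n : Fin k → V → ℕ := fun j x => Module.finrank ℝ ((W j).space x)
  let b : ∀ j x, Module.Basis (Fin (n j x)) ℝ ((W j).space x) := fun j x => Module.finBasis ℝ _
  let f : ∀ j a, (W j).space (src a) →ₗ[ℝ] (W j).space (tgt a) := fun j a =>
    (Matrix.toLin' (R a)).restrict (fun v hv => (W j).invariant a v hv)
  let M : ∀ j, Rep src tgt (n j) := fun j a => LinearMap.toMatrix (b j (src a)) (b j (tgt a)) (f j a)
  have hstab : ∀ j, ∃ B : ∀ x : V, Matrix (Fin (n j x)) (Fin (n j x)) ℝ, (∀ x, IsUnit (B x).det) ∧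
      Pair src tgt (n j) (act src tgt (n j) B (M j)) σ := by
    intro j
    apply stable_exists src tgt (n j) (M j) σ (h0 j)
    rintro W1 ⟨x1, h1⟩ ⟨x2, h2⟩
    let g : ∀ x, (Fin (n j x) → ℝ) →ₗ[ℝ] (Fin (dv x) → ℝ) := fun x =>
      ((W j).space x).subtype ∘ₗ (b j x).equivFun.symm.toLinearMap
    have hg : ∀ x, Function.Injective (g x) := fun x =>
      (Subtype.val_injective).comp (b j x).equivFun.symm.injective
    let W' : Subrep src tgt dv R := ⟨fun x => (W1.space x).map (g x), by
      rintro a _ ⟨v, hv, rfl⟩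
      refine ⟨_, W1.invariant a v hv, ?_⟩
      have e1 : (M j a) *ᵥ v = (b j (tgt a)).equivFun (f j a ((b j (src a)).equivFun.symm v)) := by
        have := LinearMap.toMatrix_mulVec_repr (b j (src a)) (b j (tgt a)) (f j a)
          ((b j (src a)).equivFun.symm v)
        have e2 : ((b j (src a)).repr ((b j (src a)).equivFun.symm v) : Fin (n j (src a)) → ℝ) = v :=
          (b j (src a)).equivFun.apply_symm_apply v
        rw [e2] at this
        exact this
      erw [e1]
      simp only [g, LinearMap.comp_apply, LinearEquiv.coe_coe, LinearEquiv.symm_apply_apply]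
      rfl⟩
    have hdim : ∀ x, Module.finrank ℝ (W'.space x) = Module.finrank ℝ (W1.space x) := fun x =>
      (LinearEquiv.finrank_eq (Submodule.equivMapOfInjective _ (hg x) (W1.space x))).symm
    have key := hst j W' ?_ ?_ ?_
    · simpa only [hdim] using key
    · rintro x _ ⟨v, _, rfl⟩
      exact ((b j x).equivFun.symm v).2
    · intro hbot
      have := hdim x1
      rw [congrFun hbot x1] at this
      rw [finrank_bot] at this
      omega
    · intro htop
      have := hdim x2
      rw [congrFun htop x2] at this
      have h3 : n j x2 = Module.finrank ℝ ((W j).space x2) := rfl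
      omega
  choose B hB hP using hstab
  let c : ∀ x, Module.Basis (Σ j, Fin (n j x)) ℝ (Fin (dv x) → ℝ) := fun x =>
    (hint x).collectedBasis (fun j => b j x)
  let s : ∀ x, Module.Basis (Fin (dv x)) ℝ (Fin (dv x) → ℝ) := fun x => Pi.basisFun ℝ _
  let e : ∀ x, (Σ j, Fin (n j x)) ≃ Fin (dv x) := fun x => (c x).indexEquiv (s x)
  let E : ∀ x, Matrix (Fin (dv x)) (Σ j, Fin (n j x)) ℝ := fun x => (s x).toMatrix (c x)
  let F : ∀ x, Matrix (Σ j, Fin (n j x)) (Fin (dv x)) ℝ := fun x => (c x).toMatrix (s x)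
  have hEF : ∀ x, E x * F x = 1 := fun x => (s x).toMatrix_mul_toMatrix_flip (c x)
  have hFE : ∀ x, F x * E x = 1 := fun x => (c x).toMatrix_mul_toMatrix_flip (s x)
  have hRE : ∀ a, R a * E (src a) = E (tgt a) * blockDiagonal' (fun j => M j a) := by
    intro a
    ext i ⟨j, p⟩
    have e1 : (R a * E (src a)) i ⟨j, p⟩ = (f j a (b j (src a) p) : Fin (dv (tgt a)) → ℝ) i := by
      rw [Matrix.mul_apply]
      show _ = ((R a) *ᵥ (b j (src a) p : Fin (dv (src a)) → ℝ)) i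
      simp only [Matrix.mulVec, dotProduct]
      refine Finset.sum_congr rfl fun q _ => ?_
      congr 1
      simp [E, s, c, Module.Basis.toMatrix_apply]
    have e2 : (f j a (b j (src a) p)) = ∑ q, M j a q p • b j (tgt a) q := by
      rw [← (b j (tgt a)).sum_repr (f j a (b j (src a) p))]
      refine Finset.sum_congr rfl fun q _ => ?_
      simp only [M, LinearMap.toMatrix_apply]
    rw [e1, e2, Matrix.mul_apply, Fintype.sum_sigma, Finset.sum_eq_single j]
    · simp only [Submodule.coe_sum, Submodule.coe_smul, Finset.sum_apply, Pi.smul_apply, smul_eq_mul]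
      refine Finset.sum_congr rfl fun q _ => ?_
      rw [Matrix.blockDiagonal'_apply_eq, mul_comm]
      congr 1
      simp [E, s, c, Module.Basis.toMatrix_apply]
    · intro j' _ hj'
      refine Finset.sum_eq_zero fun i' _ => ?_
      rw [Matrix.blockDiagonal'_apply_ne _ _ _ hj', mul_zero]
    · simp
  let Am : ∀ x : V, Matrix (Fin (dv x)) (Fin (dv x)) ℝ := fun x =>
    (blockDiagonal' (fun j => B j x) * F x).submatrix (e x).symm id
  let Ai : ∀ x : V, Matrix (Fin (dv x)) (Fin (dv x)) ℝ := fun x =>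
    (E x * blockDiagonal' (fun j => (B j x)⁻¹)).submatrix id (e x).symm
  have hinv : ∀ x, Am x * Ai x = 1 := by
    intro x
    simp only [Am, Ai]
    rw [← Matrix.submatrix_mul _ _ _ _ _ Function.bijective_id]
    have : blockDiagonal' (fun j => B j x) * F x * (E x * blockDiagonal' (fun j => (B j x)⁻¹)) = 1 := by
      rw [Matrix.mul_assoc, ← Matrix.mul_assoc (F x), hFE, Matrix.one_mul,
        ← Matrix.blockDiagonal'_mul]
      simp only [Matrix.mul_nonsing_inv _ (hB _ x)]
      exact Matrix.blockDiagonal'_one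
    rw [this, Matrix.submatrix_one_equiv]
  refine ⟨Am, fun x => ?_, ?_⟩
  · rw [← Matrix.isUnit_iff_isUnit_det]
    exact IsUnit.of_mul_eq_one _ (hinv x)
  · apply pair_blockDiagonal src tgt dv n (fun j => act src tgt (n j) (B j) (M j)) σ hP e
    intro a
    simp only [act]
    rw [Matrix.inv_eq_right_inv (hinv (src a))]
    have e3 : blockDiagonal' (fun j => B j (tgt a) * M j a * (B j (src a))⁻¹) =
        (blockDiagonal' (fun j => B j (tgt a)) * F (tgt a)) * R a *
          (E (src a) * blockDiagonal' (fun j => (B j (src a))⁻¹)) := by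
      rw [Matrix.blockDiagonal'_mul, Matrix.blockDiagonal'_mul]
      calc _ = blockDiagonal' (fun j => B j (tgt a)) * (F (tgt a) * E (tgt a)) *
            blockDiagonal' (fun j => M j a) * blockDiagonal' (fun j => (B j (src a))⁻¹) := by
              rw [hFE, Matrix.mul_one]
        _ = blockDiagonal' (fun j => B j (tgt a)) * F (tgt a) * (E (tgt a) *
            blockDiagonal' (fun j => M j a)) * blockDiagonal' (fun j => (B j (src a))⁻¹) := by
              simp only [Matrix.mul_assoc]
        _ = _ := by rw [← hRE]; simp only [Matrix.mul_assoc]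
    rw [e3, Matrix.submatrix_mul _ _ _ id _ Function.bijective_id,
      Matrix.submatrix_mul _ _ _ id _ Function.bijective_id]
    rfl

lemma extend_past {E : Type} [NormedAddCommGroup E] [NormedSpace ℝ E] (S : Set E) (u v : E)
    (hu : u ∈ intrinsicInterior ℝ S) (hv : v ∈ S) :
    ∃ t : ℝ, 0 < t ∧ u + t • (u - v) ∈ S := by
  rw [mem_intrinsicInterior] at hu
  obtain ⟨y, hy, rfl⟩ := hu
  have hmem : ∀ t : ℝ, (y : E) + t • ((y : E) - v) ∈ affineSpan ℝ S := by
    intro t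
    have := AffineSubspace.smul_vsub_vadd_mem (affineSpan ℝ S) t y.2 (subset_affineSpan ℝ S hv) y.2
    simpa [add_comm] using this
  let φ : ℝ → affineSpan ℝ S := fun t => ⟨(y : E) + t • ((y : E) - v), hmem t⟩
  have hφ : Continuous φ := Continuous.subtype_mk (by fun_prop) _
  have hφ0 : φ 0 = y := by simp [φ]
  have h1 : ∀ᶠ t in nhds (0 : ℝ), φ t ∈ interior (((↑) : affineSpan ℝ S → E) ⁻¹' S) :=
    hφ.continuousAt.eventually_mem (by rw [hφ0]; exact isOpen_interior.mem_nhds hy)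
  have h2 : ∀ᶠ t in nhdsWithin (0 : ℝ) (Set.Ioi 0), φ t ∈ interior (((↑) : affineSpan ℝ S → E) ⁻¹' S) :=
    h1.filter_mono nhdsWithin_le_nhds
  obtain ⟨t, ht, ht0⟩ := (h2.and self_mem_nhdsWithin).exists
  exact ⟨t, ht0, interior_subset (s := ((↑) : affineSpan ℝ S → E) ⁻¹' S) ht⟩

lemma hard_direction [Fintype V] [Fintype A] (src tgt : A → V) (dv : V → ℕ) (R : Rep src tgt dv)
    (hlss : LocallySemisimple src tgt dv R) (σ : V → ℝ)
    (hσ : σ ∈ intrinsicInterior ℝ (OrbitCone src tgt dv R)) :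
    ∃ B : ∀ x : V, Matrix (Fin (dv x)) (Fin (dv x)) ℝ, (∀ x, IsUnit (B x).det) ∧
      Pair src tgt dv (act src tgt dv B R) σ := by
  obtain ⟨σ₀, k, W, hint, hW⟩ := hlss
  have hst0 : ∀ j, ∀ W' : Subrep src tgt dv R, (∀ x, W'.space x ≤ (W j).space x) →
      W'.space ≠ (fun x => (⊥ : Submodule ℝ (Fin (dv x) → ℝ))) → W'.space ≠ (W j).space →
      (∑ x, (σ₀ x : ℝ) * Module.finrank ℝ (W'.space x)) < 0 := by
    intro j W' h1 h2 h3
    have := (hW j).2 W' h1 h2 h3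
    exact_mod_cast this
  obtain ⟨B0, hB0, hP0⟩ := assemble src tgt dv R (fun x => (σ₀ x : ℝ)) k W hint
    (fun j => by exact_mod_cast (hW j).1) hst0
  have hm0 := intrinsicInterior_subset (easy_direction src tgt dv R _ B0 hB0 hP0)
  have hm := intrinsicInterior_subset hσ
  obtain ⟨t, ht, hmt⟩ := extend_past _ _ _ hσ hm0
  apply assemble src tgt dv R σ k W hint
  · have hsum : ∑ j, ∑ x, σ x * (Module.finrank ℝ ((W j).space x) : ℝ) = 0 := by
      rw [Finset.sum_comm, ← hm.1]
      refine Finset.sum_congr rfl fun x _ => ?_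
      rw [← Finset.mul_sum]
      congr 1
      have h1 := Module.finrank_eq_card_basis ((hint x).collectedBasis
        (fun j => Module.finBasis ℝ ((W j).space x)))
      simp only [Module.finrank_fintype_fun_eq_card, Fintype.card_fin, Fintype.card_sigma] at h1
      exact_mod_cast h1.symm
    intro j
    have := (Finset.sum_eq_zero_iff_of_nonpos (fun j _ => hm.2 (W j))).1 hsum
    exact this j (Finset.mem_univ _)
  · intro j W' h1 h2 h3
    have e1 := hst0 j W' h1 h2 h3
    have e2 := hmt.2 W'
    have e3 := hm.2 W'
    have e4 : ∑ x, (σ + t • (σ - fun x => (σ₀ x : ℝ))) x * Module.finrank ℝ (W'.space x) =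
        (1 + t) * (∑ x, σ x * Module.finrank ℝ (W'.space x)) -
          t * (∑ x, (σ₀ x : ℝ) * Module.finrank ℝ (W'.space x)) := by
      rw [Finset.mul_sum, Finset.mul_sum, ← Finset.sum_sub_distrib]
      refine Finset.sum_congr rfl fun x _ => ?_
      simp only [Pi.add_apply, Pi.smul_apply, Pi.sub_apply, smul_eq_mul]
      ring
    rw [e4] at e2
    have e5 := mul_neg_of_pos_of_neg ht e1
    by_contra hcon
    have e6 : ∑ x, σ x * (Module.finrank ℝ (W'.space x) : ℝ) = 0 := le_antisymm e3 (not_lt.1 hcon)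
    rw [e6] at e2
    linarith

end Aux

/-- **Quiver Radial Isotropy.**  Let `Q` be a finite connected acyclic quiver, `R` a real
representation of dimension vector `dv` which is locally semi-simple, and `σ` an integral
weight.  Then `σ` lies in the relative (intrinsic) interior of the orbit cone `Ω(R)` if and
only if some `A ∈ ∏_x GL(dv x, ℝ)` puts `R` in `σ`-critical position. -/
theorem quiver_radial_isotropy {V A : Type} [Fintype V] [DecidableEq V] [Fintype A]
    (src tgt : A → V) (dv : V → ℕ)
    (hconn : Connected src tgt) (hacyc : Acyclic src tgt)
    (R : Rep src tgt dv) (hlss : LocallySemisimple src tgt dv R)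
    (σ : V → ℤ) :
    ((fun x => (σ x : ℝ)) ∈ intrinsicInterior ℝ (OrbitCone src tgt dv R)) ↔
      ∃ Amat : ∀ x : V, Matrix (Fin (dv x)) (Fin (dv x)) ℝ,
        (∀ x, IsUnit (Amat x).det) ∧
        IsCritical src tgt dv (act src tgt dv Amat R) σ := by
  constructor
  · intro h
    obtain ⟨B, hB, hP⟩ := hard_direction src tgt dv R hlss _ h
    exact ⟨B, hB, isCritical_of_pair src tgt dv _ σ hP⟩
  · rintro ⟨B, hB, hC⟩
    exact easy_direction src tgt dv R _ B hB (pair_of_isCritical src tgt dv _ σ hC)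

end QuiverRI
end

section
/- (RIF-degeneration of a semi-stable frame.) Let F = (X_1, …, X_n) with X_i ∈ ℝ^{d×d_i} be a matrix frame and c = (c_1,…,c_n) ∈ ℚ^n_{>0} with ∑_{i=1}^n c_i = d and c ∈ K_F. Then there exists a tuple F̃ = (X̃_1, …, X̃_n) with X̃_i ∈ ℝ^{d×d_i} such that: (a) (X̃_1,…,X̃_n) lies in the closure, in ∏_{i=1}^n ℝ^{d×d_i}, of the orbit {(λ_1·B·X_1, …, λ_n·B·X_n) : B ∈ GL(d,ℝ), λ_1,…,λ_n ∈ ℝ∖{0}}; (b) c ∈ K_{F̃} (so (F̃, c) is a semi-stable frame); and (c) (F̃, c) can be transformed into a radial isotropic frame, i.e. there exists A ∈ GL(d,ℝ) with each A·X̃_i nonzero and ∑_{i=1}^n c_i·(A·X̃_i)(A·X̃_i)ᵀ/‖A·X̃_i‖_F² = I_d. -/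
open scoped BigOperators
open Matrix

namespace MFrames

/-- The squared Frobenius norm of a real matrix. -/
noncomputable def frobSq {α β : Type*} [Fintype α] [Fintype β] (X : Matrix α β ℝ) : ℝ :=
  ∑ i, ∑ j, X i j ^ 2

variable {d n : ℕ} {m : Fin n → ℕ}

/-- Squared distance between two tuples of matrices. -/
noncomputable def dist2 (F G : ∀ i : Fin n, Matrix (Fin d) (Fin (m i)) ℝ) : ℝ :=
  ∑ i, frobSq (F i - G i)

/-- The frame operator `∑ Xᵢ Xᵢᵀ`. -/
noncomputable def frameOp (F : ∀ i : Fin n, Matrix (Fin d) (Fin (m i)) ℝ) :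
    Matrix (Fin d) (Fin d) ℝ :=
  ∑ i, F i * (F i)ᵀ

/-- `F` is a matrix frame: `∑ Xᵢ Xᵢᵀ` is positive definite. -/
def IsMatrixFrame (F : ∀ i : Fin n, Matrix (Fin d) (Fin (m i)) ℝ) : Prop :=
  (frameOp F).PosDef

/-- `F` is an ε-nearly equal-norm Parseval matrix frame. -/
def NearlyENParseval (ε : ℝ) (F : ∀ i : Fin n, Matrix (Fin d) (Fin (m i)) ℝ) : Prop :=
  (frameOp F - (1 - ε) • (1 : Matrix (Fin d) (Fin d) ℝ)).PosSemidef ∧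
  ((1 + ε) • (1 : Matrix (Fin d) (Fin d) ℝ) - frameOp F).PosSemidef ∧
  ∀ i, (1 - ε) * ((d : ℝ) / n) ≤ frobSq (F i) ∧ frobSq (F i) ≤ (1 + ε) * ((d : ℝ) / n)

/-- `F` is an equal-norm Parseval matrix frame. -/
def EqualNormParseval (F : ∀ i : Fin n, Matrix (Fin d) (Fin (m i)) ℝ) : Prop :=
  frameOp F = 1 ∧ ∀ i, frobSq (F i) = (d : ℝ) / n

/-- The columns of the concatenated matrix `[X₁ | … | Xₙ]`. -/
def col (F : ∀ i : Fin n, Matrix (Fin d) (Fin (m i)) ℝ) (p : (i : Fin n) × Fin (m i)) :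
    Fin d → ℝ :=
  fun r => F p.1 r p.2

/-- `F` is generic: `n > d` and any `d` of the columns of `[X₁ | … | Xₙ]` are linearly
independent (hence a basis of `ℝ^d`). -/
def Generic (F : ∀ i : Fin n, Matrix (Fin d) (Fin (m i)) ℝ) : Prop :=
  d < n ∧ ∀ S : Finset ((i : Fin n) × Fin (m i)), S.card = d →
    LinearIndependent ℝ (fun p : S => col F (p : (i : Fin n) × Fin (m i)))

/-- Column span of a matrix. -/
def colSpan {k : ℕ} (X : Matrix (Fin d) (Fin k) ℝ) : Submodule ℝ (Fin d → ℝ) :=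
  Submodule.span ℝ (Set.range Xᵀ)

/-- The orbit polytope `K_F` of a tuple of matrices. -/
def orbitPolytope (F : ∀ i : Fin n, Matrix (Fin d) (Fin (m i)) ℝ) : Set (Fin n → ℝ) :=
  {c | (∀ i, 0 ≤ c i) ∧ (∑ i, c i = d) ∧
    ∀ I : Finset (Fin n),
      ∑ i ∈ I, c i ≤ (Module.finrank ℝ ↥(⨆ i ∈ I, colSpan (F i)) : ℝ)}

/-- `Φ_F(t) = log det (∑ e^{tᵢ} Xᵢ Xᵢᵀ)`. -/
noncomputable def Phi (F : ∀ i : Fin n, Matrix (Fin d) (Fin (m i)) ℝ) (t : Fin n → ℝ) : ℝ :=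
  Real.log (∑ i, Real.exp (t i) • (F i * (F i)ᵀ)).det

/-- The objective function `Φ_F(t) - ⟨t, c⟩` whose infimum over `t` is `f_F(c)`. -/
noncomputable def obj (F : ∀ i : Fin n, Matrix (Fin d) (Fin (m i)) ℝ)
    (c : Fin n → ℝ) (t : Fin n → ℝ) : ℝ :=
  Phi F t - ∑ i, t i * c i

/-- `Δ_S` for `S ∈ 𝒜`, where `S` is encoded as a function `σ` assigning to each `i` a subset
`σ i ⊆ {1,…,dᵢ}` of the columns of `Xᵢ` (with `i ∈ S` iff `σ i ≠ ∅`). -/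
noncomputable def Delta (F : ∀ i : Fin n, Matrix (Fin d) (Fin (m i)) ℝ)
    (σ : ∀ i : Fin n, Finset (Fin (m i))) : ℝ :=
  (∑ i, ∑ k ∈ σ i, Matrix.of (fun r s : Fin d => F i r k * F i s k)).det

/-- The index set `𝒜`: collections of subsets of columns with `d` columns in total. -/
def indexA (d : ℕ) (m : Fin n → ℕ) : Finset (∀ i : Fin n, Finset (Fin (m i))) :=
  Finset.univ.filter fun σ => (∑ i, (σ i).card) = d

/-- Membership in the semialgebraic set `𝕍(F, c)`.  (Summing `(σ i).card • ⋯` over all of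
`𝒜` is the same as summing `|Sᵢ| • ⋯` over those `S ∈ 𝒜` with `i ∈ S`.) -/
noncomputable def inVariety (F : ∀ i : Fin n, Matrix (Fin d) (Fin (m i)) ℝ)
    (c ξ : Fin n → ℝ) : Prop :=
  (∀ i, 0 < ξ i) ∧ ∀ i,
    (∑ σ ∈ indexA d m, ((σ i).card : ℝ) * (∏ l, ξ l ^ (σ l).card) * Delta F σ)
      = c i * ∑ σ ∈ indexA d m, (∏ l, ξ l ^ (σ l).card) * Delta F σ

/-- `A` transforms `(F, c)` into a radial isotropic frame. -/
noncomputable def TransformsToRIF (F : ∀ i : Fin n, Matrix (Fin d) (Fin (m i)) ℝ)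
    (c : Fin n → ℝ) (A : Matrix (Fin d) (Fin d) ℝ) : Prop :=
  ∑ i, (c i / frobSq (A * F i)) • ((A * F i) * (A * F i)ᵀ) = 1

/-- Columns of `X` all orthogonal to the subspace `T`, i.e. `Col(X) ⊆ T^⊥`. -/
def colsPerp {k : ℕ} (X : Matrix (Fin d) (Fin k) ℝ) (T : Submodule ℝ (Fin d → ℝ)) : Prop :=
  ∀ x ∈ T, Xᵀ.mulVec x = 0

end MFrames

namespace MFrames


lemma greedy {d n : ℕ} {m : Fin n → ℕ}
    (F : ∀ i : Fin n, Matrix (Fin d) (Fin (m i)) ℝ) (c w : Fin n → ℝ)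
    (hK : ∀ I : Finset (Fin n),
      ∑ i ∈ I, c i ≤ (Module.finrank ℝ ↥(⨆ i ∈ I, colSpan (F i)) : ℝ)) (s : Finset (Fin n)) :
    ∃ T : Finset ((i : Fin n) × Fin (m i)), (∀ p ∈ T, p.1 ∈ s) ∧
      LinearIndepOn ℝ (col F) (T : Set ((i : Fin n) × Fin (m i))) ∧
      ∑ i ∈ s, c i ≤ (T.card : ℝ) ∧
      ∀ L, (∀ i ∈ s, w i ≤ L) → ∑ i ∈ s, c i * (L - w i) ≤ ∑ p ∈ T, (L - w p.1) := by
  classical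
  induction s using Finset.induction_on_max_value w with
  | empty => exact ⟨∅, by simp⟩
  | insert a s ha hmax ih =>
    obtain ⟨T, hT, hli, hcard, hL⟩ := ih
    obtain ⟨b, hbt, hsb, hspan, hlib⟩ := exists_linearIndepOn_extension hli
      (t := {p : (i : Fin n) × Fin (m i) | p.1 ∈ insert a s})
      (fun p hp => Finset.mem_insert_of_mem (hT p hp))
    have hcard' : ∑ i ∈ insert a s, c i ≤ (b.toFinset.card : ℝ) := by
      refine (hK _).trans ?_
      have h1 : (⨆ i ∈ insert a s, colSpan (F i)) ≤ Submodule.span ℝ (col F '' b) := by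
        refine iSup₂_le fun i hi => Submodule.span_le.2 ?_
        rintro _ ⟨k, rfl⟩
        exact hspan ⟨⟨i, k⟩, hi, rfl⟩
      have h2 := Submodule.finrank_mono h1
      have h3 := finrank_span_finset_le_card (R := ℝ) (b.toFinset.image (col F))
      have h4 : ((b.toFinset.image (col F) : Finset _) : Set (Fin d → ℝ)) = col F '' b := by simp
      rw [Set.finrank, h4] at h3
      exact_mod_cast h2.trans (h3.trans Finset.card_image_le)
    refine ⟨b.toFinset, fun p hp => hbt (by simpa using hp), by simpa using hlib, hcard', ?_⟩
    intro L hLa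
    have hwa : w a ≤ L := hLa a (Finset.mem_insert_self _ _)
    have e1 : ∑ i ∈ insert a s, c i * (L - w i)
        = ∑ i ∈ s, c i * (w a - w i) + (L - w a) * ∑ i ∈ insert a s, c i := by
      rw [Finset.sum_insert ha, Finset.sum_insert ha, mul_add, Finset.mul_sum]
      rw [add_left_comm, ← Finset.sum_add_distrib]
      congr 1
      · ring
      · exact Finset.sum_congr rfl fun i _ => by ring
    have e2 : ∑ p ∈ b.toFinset, (L - w p.1)
        = ∑ p ∈ b.toFinset, (w a - w p.1) + (L - w a) * b.toFinset.card := by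
      rw [mul_comm, ← nsmul_eq_mul, ← Finset.sum_const, ← Finset.sum_add_distrib]
      exact Finset.sum_congr rfl fun i _ => by ring
    have e3 : ∑ p ∈ T, (w a - w p.1) ≤ ∑ p ∈ b.toFinset, (w a - w p.1) := by
      refine Finset.sum_le_sum_of_subset_of_nonneg (fun p hp => by simpa using hsb hp) ?_
      intro p hp _
      have : p.1 ∈ insert a s := hbt (by simpa using hp)
      rcases Finset.mem_insert.1 this with h | h
      · rw [h]; simp
      · linarith [hmax _ h]
    have e4 := hL (w a) hmax
    have e5 := mul_le_mul_of_nonneg_left hcard' (sub_nonneg.2 hwa)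
    linarith

lemma exists_selection {d n : ℕ} {m : Fin n → ℕ}
    (F : ∀ i : Fin n, Matrix (Fin d) (Fin (m i)) ℝ) (c w : Fin n → ℝ)
    (hc : c ∈ orbitPolytope F) :
    ∃ e : Fin d → (i : Fin n) × Fin (m i), LinearIndependent ℝ (fun j => col F (e j)) ∧
      ∑ j, w (e j).1 ≤ ∑ i, c i * w i := by
  obtain ⟨-, hsum, hK⟩ := hc
  obtain ⟨T, -, hli, hcard, hL⟩ := greedy F c w hK Finset.univ
  rw [hsum] at hcard
  have h1 : d ≤ T.card := by exact_mod_cast hcard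
  have h2 : T.card ≤ d := by
    have := LinearIndependent.fintype_card_le_finrank hli
    simpa using this
  have h3 : T.card = d := le_antisymm h2 h1
  let E : Fin d ≃ T := (T.equivFinOfCardEq h3).symm
  refine ⟨fun j => (E j).1, ?_, ?_⟩
  · exact hli.comp (fun j => E j) E.injective
  · have h4 : ∑ j, w (E j).1.1 = ∑ p ∈ T, w p.1 := by
      rw [← Finset.sum_coe_sort T]
      exact Equiv.sum_comp E (fun p => w p.1.1)
    obtain ⟨L, hLL⟩ := (Set.finite_range w).bddAbove
    have := hL L (fun i _ => hLL ⟨i, rfl⟩)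
    simp only [mul_sub, Finset.sum_sub_distrib, ← Finset.sum_mul, hsum, Finset.sum_const, h3,
      nsmul_eq_mul] at this
    rw [h4]; linarith

lemma det_sq_le {d : ℕ} (N : Matrix (Fin d) (Fin d) ℝ) (b : Fin d → ℝ)
    (hb : ∀ r j, N r j ^ 2 ≤ b j) : N.det ^ 2 ≤ (d.factorial : ℝ) ^ 2 * ∏ j, b j := by
  have hb0 : ∀ j : Fin d, 0 ≤ b j := fun j => (sq_nonneg _).trans (hb j j)
  have h : |N.det| ≤ d.factorial * ∏ j, √(b j) := by
    rw [Matrix.det_apply]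
    refine (Finset.abs_sum_le_sum_abs _ _).trans ?_
    have : ∀ σ ∈ (Finset.univ : Finset (Equiv.Perm (Fin d))),
        |Equiv.Perm.sign σ • ∏ i, N (σ i) i| ≤ ∏ j, √(b j) := by
      intro σ _
      have : |Equiv.Perm.sign σ • ∏ i, N (σ i) i| = ∏ i, |N (σ i) i| := by
        rw [← Finset.abs_prod]
        rcases Int.units_eq_one_or (Equiv.Perm.sign σ) with h | h <;> simp [h]
      rw [this]
      exact Finset.prod_le_prod (fun _ _ => abs_nonneg _) fun j _ => Real.abs_le_sqrt (hb _ _)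
    refine (Finset.sum_le_sum this).trans ?_
    simp [Fintype.card_perm]
  rw [← sq_abs]
  refine (pow_le_pow_left₀ (abs_nonneg _) h 2).trans ?_
  rw [mul_pow, ← Finset.prod_pow]
  simp [Real.sq_sqrt, hb0]

lemma sq_le_frobSq {α β : Type*} [Fintype α] [Fintype β] (X : Matrix α β ℝ) (a : α) (b : β) :
    X a b ^ 2 ≤ frobSq X := by
  unfold frobSq
  refine le_trans ?_ (Finset.single_le_sum (f := fun i => ∑ j, X i j ^ 2)
    (fun i _ => Finset.sum_nonneg fun j _ => sq_nonneg _) (Finset.mem_univ a))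
  exact Finset.single_le_sum (f := fun j => X a j ^ 2) (fun i _ => sq_nonneg _) (Finset.mem_univ b)

lemma frobSq_nonneg {α β : Type*} [Fintype α] [Fintype β] (X : Matrix α β ℝ) : 0 ≤ frobSq X :=
  Finset.sum_nonneg fun _ _ => Finset.sum_nonneg fun _ _ => sq_nonneg _

lemma frobSq_pos {α β : Type*} [Fintype α] [Fintype β] {X : Matrix α β ℝ} (h : X ≠ 0) :
    0 < frobSq X := by
  by_contra hn
  apply h
  ext a b
  have := sq_le_frobSq X a b
  have h2 := sq_nonneg (X a b)
  exact pow_eq_zero_iff (two_ne_zero) |>.1 (by linarith)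

lemma frobSq_smul {α β : Type*} [Fintype α] [Fintype β] (t : ℝ) (X : Matrix α β ℝ) :
    frobSq (t • X) = t ^ 2 * frobSq X := by
  simp [frobSq, mul_pow, Finset.mul_sum]

lemma mul_ne_zero_of_unit {d k : ℕ} {B : Matrix (Fin d) (Fin d) ℝ} (hB : IsUnit B.det)
    {X : Matrix (Fin d) (Fin k) ℝ} (hX : X ≠ 0) : B * X ≠ 0 := by
  intro h
  apply hX
  rw [← Matrix.nonsing_inv_mul_cancel_left B X hB, h, Matrix.mul_zero]

noncomputable def Psi {d n : ℕ} {m : Fin n → ℕ}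
    (F : ∀ i : Fin n, Matrix (Fin d) (Fin (m i)) ℝ) (c : Fin n → ℝ)
    (B : Matrix (Fin d) (Fin d) ℝ) : ℝ :=
  ∑ i, c i * Real.log (frobSq (B * F i)) - Real.log (B.det ^ 2)

lemma Psi_bddBelow {d n : ℕ} {m : Fin n → ℕ}
    (F : ∀ i : Fin n, Matrix (Fin d) (Fin (m i)) ℝ) (c : Fin n → ℝ)
    (hc : c ∈ orbitPolytope F) (h0 : ∀ i, F i ≠ 0) :
    ∃ C, ∀ B : Matrix (Fin d) (Fin d) ℝ, IsUnit B.det → C ≤ Psi F c B := by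
  obtain ⟨C, hC⟩ := (Set.finite_range (fun e : Fin d → (i : Fin n) × Fin (m i) =>
    Real.log ((Matrix.of (fun r j => col F (e j) r)).det ^ 2))).bddBelow
  refine ⟨C - Real.log ((d.factorial : ℝ) ^ 2), fun B hB => ?_⟩
  obtain ⟨e, he, hle⟩ := exists_selection F c (fun i => Real.log (frobSq (B * F i))) hc
  have h1 := hC ⟨e, rfl⟩
  simp only at h1
  set M : Matrix (Fin d) (Fin d) ℝ := Matrix.of (fun r j => col F (e j) r) with hM
  have hMdet : M.det ≠ 0 := by
    have : LinearIndependent ℝ M.col := he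
    rw [Matrix.linearIndependent_cols_iff_isUnit] at this
    exact ((Matrix.isUnit_iff_isUnit_det _).1 this).ne_zero
  have hpos : ∀ i, 0 < frobSq (B * F i) := fun i => frobSq_pos (mul_ne_zero_of_unit hB (h0 i))
  have h2 := det_sq_le (B * M) (fun j => frobSq (B * F (e j).1)) (fun r j =>
    sq_le_frobSq (B * F (e j).1) r (e j).2)
  have hBM : (B * M).det ^ 2 = B.det ^ 2 * M.det ^ 2 := by rw [Matrix.det_mul, mul_pow]
  rw [hBM] at h2
  have hb : B.det ^ 2 ≠ 0 := pow_ne_zero _ hB.ne_zero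
  have hm : M.det ^ 2 ≠ 0 := pow_ne_zero _ hMdet
  have h3 := Real.log_le_log (by positivity) h2
  rw [Real.log_mul hb hm, Real.log_mul (by positivity)
    (Finset.prod_ne_zero_iff.2 fun j _ => (hpos _).ne'),
    Real.log_prod (fun j _ => (hpos _).ne')] at h3
  unfold Psi
  linarith


lemma continuous_frobSq {α β : Type*} [Fintype α] [Fintype β] :
    Continuous (frobSq : Matrix α β ℝ → ℝ) := by
  unfold frobSq
  refine continuous_finsetSum _ fun i _ => continuous_finsetSum _ fun j _ => ?_
  exact (continuous_id.matrix_elem i j).pow 2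

lemma isCompact_sphere {d n : ℕ} (m : Fin n → ℕ) :
    IsCompact {Y : ∀ i : Fin n, Matrix (Fin d) (Fin (m i)) ℝ | ∀ i, frobSq (Y i) = 1} := by
  have h1 : ∀ i : Fin n, IsCompact {X : Matrix (Fin d) (Fin (m i)) ℝ | frobSq X = 1} := by
    intro i
    have hk : IsCompact (Set.pi Set.univ (fun _ : Fin d => Set.pi Set.univ
        (fun _ : Fin (m i) => Set.Icc (-1 : ℝ) 1))) :=
      isCompact_univ_pi fun _ => isCompact_univ_pi fun _ => isCompact_Icc
    have hcl : IsClosed {X : Matrix (Fin d) (Fin (m i)) ℝ | frobSq X = 1} :=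
      isClosed_eq continuous_frobSq continuous_const
    refine IsCompact.of_isClosed_subset hk hcl ?_
    intro X hX r _ k _
    have := sq_le_frobSq X r k
    rw [show frobSq X = 1 from hX] at this
    exact abs_le.1 ((sq_le_one_iff_abs_le_one _).1 this)
  have := isCompact_univ_pi h1
  convert this using 1
  ext Y; simp [Set.mem_pi]

lemma exists_limit {d n : ℕ} {m : Fin n → ℕ}
    (F : ∀ i : Fin n, Matrix (Fin d) (Fin (m i)) ℝ) (c : Fin n → ℝ)
    (hc : c ∈ orbitPolytope F) (h0 : ∀ i, F i ≠ 0) :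
    ∃ Y : ∀ i : Fin n, Matrix (Fin d) (Fin (m i)) ℝ,
      Y ∈ closure {G : ∀ i : Fin n, Matrix (Fin d) (Fin (m i)) ℝ |
          ∃ B : Matrix (Fin d) (Fin d) ℝ, IsUnit B.det ∧
            ∃ lam : Fin n → ℝ, (∀ i, lam i ≠ 0) ∧ G = fun i => lam i • (B * F i)} ∧
      (∀ i, frobSq (Y i) = 1) ∧
      ∀ B : Matrix (Fin d) (Fin d) ℝ, IsUnit B.det → 0 ≤ Psi Y c B := by
  obtain ⟨C, hC⟩ := Psi_bddBelow F c hc h0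
  set S : Set ℝ := {x | ∃ B : Matrix (Fin d) (Fin d) ℝ, IsUnit B.det ∧ Psi F c B = x} with hS
  have hSne : S.Nonempty := ⟨_, 1, by simp, rfl⟩
  have hSb : BddBelow S := ⟨C, by rintro _ ⟨B, hB, rfl⟩; exact hC B hB⟩
  obtain ⟨u, -, hu, huS⟩ := exists_seq_tendsto_sInf hSne hSb
  choose B hB hBu using huS
  have hpos : ∀ k i, 0 < frobSq (B k * F i) :=
    fun k i => frobSq_pos (mul_ne_zero_of_unit (hB k) (h0 i))
  let lam : ℕ → Fin n → ℝ := fun k i => (√(frobSq (B k * F i)))⁻¹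
  have hlam : ∀ k i, lam k i ≠ 0 := fun k i => inv_ne_zero (Real.sqrt_pos.2 (hpos k i)).ne'
  have hlam2 : ∀ k i, lam k i ^ 2 = (frobSq (B k * F i))⁻¹ := fun k i => by
    simp only [lam, inv_pow, Real.sq_sqrt (hpos k i).le]
  let Z : ℕ → ∀ i : Fin n, Matrix (Fin d) (Fin (m i)) ℝ := fun k i => lam k i • (B k * F i)
  have hZ : ∀ k, Z k ∈ {Y : ∀ i : Fin n, Matrix (Fin d) (Fin (m i)) ℝ |
      ∀ i, frobSq (Y i) = 1} := fun k i => by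
    simp only [Z, frobSq_smul, hlam2, inv_mul_cancel₀ (hpos k i).ne']
  obtain ⟨f, hf, hfle⟩ : ∃ f : Ultrafilter ℕ, (f : Filter ℕ) ≤ Filter.atTop ∧ True :=
    ⟨Filter.hyperfilter ℕ, by
      simpa [Nat.cofinite_eq_atTop] using Filter.hyperfilter_le_cofinite (α := ℕ), trivial⟩
  obtain ⟨Y, hY, hlim⟩ := (isCompact_sphere (d := d) m).ultrafilter_le_nhds (f.map Z)
    (Filter.le_principal_iff.2 (Filter.mem_map.2 (Filter.univ_mem' hZ)))
  have hlim' : Filter.Tendsto Z f (nhds Y) := hlim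
  refine ⟨Y, ?_, hY, ?_⟩
  · refine mem_closure_of_tendsto hlim' (Filter.Eventually.of_forall fun k => ?_)
    exact ⟨B k, hB k, lam k, hlam k, rfl⟩
  intro A hA
  have key : ∀ k, Psi (Z k) c A = Psi F c (A * B k) - Psi F c (B k) := by
    intro k
    have hA2 : A.det ^ 2 ≠ 0 := pow_ne_zero _ hA.ne_zero
    have hB2 : (B k).det ^ 2 ≠ 0 := pow_ne_zero _ (hB k).ne_zero
    have hAB : IsUnit (A * B k).det := by rw [Matrix.det_mul]; exact hA.mul (hB k)
    have e : ∀ i, Real.log (frobSq (A * Z k i))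
        = Real.log (frobSq (A * B k * F i)) - Real.log (frobSq (B k * F i)) := by
      intro i
      have : A * Z k i = lam k i • (A * B k * F i) := by
        simp only [Z, Matrix.mul_smul, Matrix.mul_assoc]
      rw [this, frobSq_smul, hlam2, Real.log_mul (inv_ne_zero (hpos k i).ne')
        (frobSq_pos (mul_ne_zero_of_unit hAB (h0 i))).ne', Real.log_inv]
      ring
    unfold Psi
    simp only [e, Matrix.det_mul, mul_pow, Real.log_mul hA2 hB2, mul_sub,
      Finset.sum_sub_distrib]
    ring
  have hZlim : Filter.Tendsto (fun k => Psi (Z k) c A) f (nhds (Psi Y c A)) := by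
    unfold Psi
    refine Filter.Tendsto.sub_const (tendsto_finsetSum _ fun i _ => ?_) _
    refine Filter.Tendsto.const_mul _ (Filter.Tendsto.log ?_ ?_)
    · have hcont : Continuous (fun X : Matrix (Fin d) (Fin (m i)) ℝ => frobSq (A * X)) :=
        continuous_frobSq.comp (continuous_const.matrix_mul continuous_id)
      exact (hcont.tendsto (Y i)).comp ((continuous_apply i).tendsto Y |>.comp hlim')
    · refine (frobSq_pos (mul_ne_zero_of_unit hA ?_)).ne'
      intro h
      have := hY i
      rw [h] at this
      simp [frobSq] at this
  have hlow : Filter.Tendsto (fun k => sInf S - u k) f (nhds (sInf S - sInf S)) :=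
    (hu.mono_left hf).const_sub _
  rw [sub_self] at hlow
  refine le_of_tendsto_of_tendsto' hlow hZlim fun k => ?_
  rw [key, hBu]
  have hAB : IsUnit (A * B k).det := by rw [Matrix.det_mul]; exact hA.mul (hB k)
  have := csInf_le hSb (show Psi F c (A * B k) ∈ S from ⟨_, hAB, rfl⟩)
  linarith

lemma isotropic_of_min {d n : ℕ} {m : Fin n → ℕ}
    (Y : ∀ i : Fin n, Matrix (Fin d) (Fin (m i)) ℝ) (c : Fin n → ℝ)
    (h1 : ∀ i, frobSq (Y i) = 1)
    (hmin : ∀ B : Matrix (Fin d) (Fin d) ℝ, IsUnit B.det → 0 ≤ Psi Y c B) :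
    ∑ i, c i • (Y i * (Y i)ᵀ) = 1 := by
  have hE : ∀ E : Matrix (Fin d) (Fin d) ℝ,
      ∑ i, c i * (∑ r, ∑ k, 2 * (Y i r k * (E * Y i) r k)) - 2 * E.trace = 0 := by
    intro E
    have hdet : HasDerivAt (fun t : ℝ => (1 + t • E).det) E.trace 0 := by
      set p := (det (1 + (Polynomial.X : Polynomial ℝ) • E.map Polynomial.C)).divX.divX with hp
      have hfun : (fun t : ℝ => (1 + t • E).det)
          = fun t : ℝ => 1 + E.trace * t + p.eval t * t ^ 2 :=
        funext fun t => Matrix.det_one_add_smul t E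
      rw [hfun]
      have := (((hasDerivAt_id (0 : ℝ)).const_mul E.trace).const_add 1).add
        ((p.hasDerivAt 0).mul ((hasDerivAt_id (0 : ℝ)).pow 2))
      simpa using! this
    have hdet0 : (1 + (0 : ℝ) • E).det = 1 := by simp
    have hlogdet : HasDerivAt (fun t : ℝ => Real.log ((1 + t • E).det ^ 2)) (2 * E.trace) 0 := by
      have := (hdet.pow 2).log (by simp)
      simpa using! this
    have hfr : ∀ i, HasDerivAt (fun t : ℝ => frobSq ((1 + t • E) * Y i))
        (∑ r, ∑ k, 2 * (Y i r k * (E * Y i) r k)) 0 := by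
      intro i
      unfold frobSq
      refine HasDerivAt.fun_sum fun r _ => HasDerivAt.fun_sum fun k _ => ?_
      have hx : HasDerivAt (fun t : ℝ => (((1 + t • E) * Y i : Matrix (Fin d) (Fin (m i)) ℝ)) r k) ((E * Y i) r k) 0 := by
        have := ((hasDerivAt_id (0 : ℝ)).mul_const ((E * Y i) r k)).const_add (Y i r k)
        simpa [Matrix.add_mul] using! this
      have := hx.pow 2
      simpa [mul_assoc] using! this
    have hPsi : HasDerivAt (fun t : ℝ => Psi Y c (1 + t • E))
        (∑ i, c i * (∑ r, ∑ k, 2 * (Y i r k * (E * Y i) r k)) - 2 * E.trace) 0 := by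
      unfold Psi
      refine HasDerivAt.fun_sub (HasDerivAt.fun_sum fun i _ => ?_) hlogdet
      have := ((hfr i).log (by simp [h1])).const_mul (c i)
      simpa [h1] using! this
    refine IsLocalMin.hasDerivAt_eq_zero ?_ hPsi
    have hev : ∀ᶠ t in nhds (0 : ℝ), (1 + t • E).det ≠ 0 :=
      hdet.continuousAt.eventually_ne (by simp)
    filter_upwards [hev] with t ht
    have : Psi Y c (1 + (0 : ℝ) • E) = 0 := by simp [Psi, h1]
    rw [this]
    exact hmin _ (isUnit_iff_ne_zero.2 ht)
  ext a b
  have h := hE (Matrix.single a b 1)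
  have hs : ∀ i, ∑ r, ∑ k, 2 * (Y i r k * (Matrix.single a b (1 : ℝ) * Y i) r k)
      = 2 * (Y i * (Y i)ᵀ) a b := by
    intro i
    rw [Finset.sum_eq_single a]
    · simp [Matrix.mul_apply, Matrix.single_apply, Finset.mul_sum]
    · intro r _ hr
      simp [Matrix.mul_apply, Matrix.single_apply, hr.symm]
    · simp
  simp only [hs] at h
  have ht : (Matrix.single a b (1 : ℝ)).trace = (1 : Matrix (Fin d) (Fin d) ℝ) a b := by
    by_cases hab : a = b
    · subst hab; simp
    · rw [Matrix.trace_single_eq_of_ne _ _ _ hab, Matrix.one_apply_ne hab]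
  rw [ht] at h
  rw [Matrix.sum_apply]
  simp only [Matrix.smul_apply, smul_eq_mul]
  have h2 : ∑ i, c i * (2 * (Y i * (Y i)ᵀ) a b) = 2 * ∑ i, c i * (Y i * (Y i)ᵀ) a b := by
    rw [Finset.mul_sum]; exact Finset.sum_congr rfl fun i _ => by ring
  rw [h2] at h
  linarith

lemma exists_onb {d : ℕ} (W : Submodule ℝ (Fin d → ℝ)) :
    ∃ u : Fin (Module.finrank ℝ W) → Fin d → ℝ, (∀ j, u j ⬝ᵥ u j = 1) ∧
      ∀ v ∈ W, v ⬝ᵥ v = ∑ j, (u j ⬝ᵥ v) ^ 2 := by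
  let e : (Fin d → ℝ) ≃ₗ[ℝ] EuclideanSpace ℝ (Fin d) := (WithLp.linearEquiv 2 ℝ (Fin d → ℝ)).symm
  let W' : Submodule ℝ (EuclideanSpace ℝ (Fin d)) := W.map (e : (Fin d → ℝ) →ₗ[ℝ] _)
  have hfin : Module.finrank ℝ W' = Module.finrank ℝ W := LinearEquiv.finrank_map_eq e W
  let b := (stdOrthonormalBasis ℝ W').reindex (finCongr hfin)
  have hin : ∀ x y : EuclideanSpace ℝ (Fin d), inner ℝ x y = (e.symm x) ⬝ᵥ (e.symm y) := by
    intro x y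
    simp [e, PiLp.inner_apply, dotProduct, mul_comm]
  refine ⟨fun j => e.symm (b j : EuclideanSpace ℝ (Fin d)), fun j => ?_, fun v hv => ?_⟩
  · rw [← hin, real_inner_self_eq_norm_sq]
    have := b.orthonormal.1 j
    rw [Submodule.coe_norm] at this
    simp [this]
  · have := b.sum_sq_inner_right ⟨e v, Submodule.mem_map_of_mem hv⟩
    rw [← real_inner_self_eq_norm_sq] at this
    simp only [Submodule.coe_inner, hin, LinearEquiv.symm_apply_apply] at this
    exact this.symm

lemma mem_orbitPolytope_of_isotropic {d n : ℕ} {m : Fin n → ℕ}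
    (Y : ∀ i : Fin n, Matrix (Fin d) (Fin (m i)) ℝ) (c : Fin n → ℝ) (hc : ∀ i, 0 ≤ c i)
    (hsum : ∑ i, c i = d) (h1 : ∀ i, frobSq (Y i) = 1)
    (hiso : ∑ i, c i • (Y i * (Y i)ᵀ) = 1) : c ∈ orbitPolytope Y := by
  refine ⟨hc, hsum, fun I => ?_⟩
  set W := ⨆ i ∈ I, colSpan (Y i) with hW
  obtain ⟨u, hu1, hu⟩ := exists_onb W
  have hq : ∀ j, ∑ i, c i * ∑ k, (u j ⬝ᵥ (Y i)ᵀ k) ^ 2 = 1 := by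
    intro j
    have h := congrArg (fun M => u j ⬝ᵥ (M *ᵥ u j)) hiso
    simp only [Matrix.one_mulVec, hu1, Matrix.sum_mulVec, dotProduct_sum, Matrix.smul_mulVec,
      dotProduct_smul, smul_eq_mul] at h
    rw [← h]
    refine Finset.sum_congr rfl fun i _ => ?_
    congr 1
    rw [← Matrix.mulVec_mulVec, Matrix.dotProduct_mulVec]
    simp only [dotProduct, Matrix.mulVec, Matrix.vecMul, sq, Matrix.transpose_apply]
    refine Finset.sum_congr rfl fun k _ => ?_
    congr 1
    exact Finset.sum_congr rfl fun r _ => mul_comm _ _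
  have hI : ∀ i ∈ I, ∑ k, ∑ j, (u j ⬝ᵥ (Y i)ᵀ k) ^ 2 = 1 := by
    intro i hi
    rw [← h1 i, frobSq, Finset.sum_comm (f := fun r k => Y i r k ^ 2)]
    refine Finset.sum_congr rfl fun k _ => ?_
    rw [← hu]
    · simp [dotProduct, sq]
    · exact (le_iSup₂_of_le (f := fun i (_ : i ∈ I) => colSpan (Y i)) i hi le_rfl)
        (Submodule.subset_span ⟨k, rfl⟩)
  calc ∑ i ∈ I, c i = ∑ i ∈ I, c i * ∑ k, ∑ j, (u j ⬝ᵥ (Y i)ᵀ k) ^ 2 :=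
        Finset.sum_congr rfl fun i hi => by rw [hI i hi, mul_one]
    _ ≤ ∑ i, c i * ∑ k, ∑ j, (u j ⬝ᵥ (Y i)ᵀ k) ^ 2 :=
        Finset.sum_le_sum_of_subset_of_nonneg (Finset.subset_univ _) fun i _ _ =>
          mul_nonneg (hc i) (Finset.sum_nonneg fun _ _ => Finset.sum_nonneg fun _ _ => sq_nonneg _)
    _ = ∑ j, ∑ i, c i * ∑ k, (u j ⬝ᵥ (Y i)ᵀ k) ^ 2 := by
        rw [Finset.sum_comm]
        refine Finset.sum_congr rfl fun i _ => ?_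
        rw [Finset.sum_comm, Finset.mul_sum]
    _ = (Module.finrank ℝ W : ℝ) := by simp [hq]

/-- **Theorem 1(2) (RIF-degeneration of a semi-stable frame).**  A semi-stable matrix frame
`(F, c)` degenerates (in the sense of quiver representations, i.e. within the closure of
its `GL(d) × (ℝˣ)ⁿ`-orbit) to a semi-stable frame `(F̃, c)` which can be transformed into
a radial isotropic frame. -/
theorem RIF_degeneration {d n : ℕ} {m : Fin n → ℕ}
    (F : ∀ i : Fin n, Matrix (Fin d) (Fin (m i)) ℝ) (hF : IsMatrixFrame F)
    (c : Fin n → ℚ) (hc : ∀ i, 0 < c i) (hsum : ∑ i, (c i : ℝ) = d)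
    (hss : (fun i => (c i : ℝ)) ∈ orbitPolytope F) :
    ∃ Ft : ∀ i : Fin n, Matrix (Fin d) (Fin (m i)) ℝ,
      Ft ∈ closure {G : ∀ i : Fin n, Matrix (Fin d) (Fin (m i)) ℝ |
          ∃ B : Matrix (Fin d) (Fin d) ℝ, IsUnit B.det ∧
            ∃ lam : Fin n → ℝ, (∀ i, lam i ≠ 0) ∧ G = fun i => lam i • (B * F i)} ∧
      (fun i => (c i : ℝ)) ∈ orbitPolytope Ft ∧
      ∃ A : Matrix (Fin d) (Fin d) ℝ, IsUnit A.det ∧ (∀ i, A * Ft i ≠ 0) ∧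
        TransformsToRIF Ft (fun i => (c i : ℝ)) A := by
  have h0 : ∀ i, F i ≠ 0 := by
    intro i hi
    have h := hss.2.2 {i}
    have hz : (⨆ j ∈ ({i} : Finset (Fin n)), colSpan (F j)) = ⊥ := by
      simp only [Finset.mem_singleton, iSup_iSup_eq_left, colSpan, Submodule.span_eq_bot, hi]
      rintro _ ⟨k, rfl⟩
      rfl
    rw [hz] at h
    have hci : (0 : ℝ) < c i := by exact_mod_cast hc i
    simp at h
    exact absurd h (not_le.2 (hc i))
  obtain ⟨Y, hcl, h1, hmin⟩ := exists_limit F _ hss h0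
  have hiso := isotropic_of_min Y _ h1 hmin
  refine ⟨Y, hcl, mem_orbitPolytope_of_isotropic Y _ hss.1 hsum h1 hiso, 1, by simp, ?_, ?_⟩
  · intro i h
    rw [Matrix.one_mul] at h
    have := h1 i
    rw [h] at this
    simp [frobSq] at this
  · simpa [TransformsToRIF, h1] using hiso

end MFrames
end
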